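/- (Aronson–Caffarelli type estimate, Theorem 1.1, first part.) Let d ≥ 1 and 0 < m < 1. There exist positive constants C₁ and C₂ depending only on d and m with the following property. Let Ω ⊆ ℝ^d be open, let u be a classical solution of the FDE ∂ₜu = Δ(u^m) on (0,T)×Ω that takes nonnegative initial data u₀ ∈ L¹_loc(Ω) and has finite extinction time T. If x₀ ∈ Ω and R > 0 are such that the closed ball of radius 3R about x₀ is contained in Ω, then for every 0 < t < T: R^{−d} ∫_{B_R(x₀)} u₀(x) dx ≤ C₁ R^{−2/(1−m)} t^{1/(1−m)} + C₂ T^{1/(1−m)} R^{−2} t^{−m/(1−m)} u(t,x₀)^m. -/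

import Mathlib

open MeasureTheory Metric Set Real

/-- The spatial Laplacian of `f : ℝ^d → ℝ` at a point, as the sum of second
coordinate derivatives. -/
noncomputable def spaceLap {d : ℕ} (f : EuclideanSpace ℝ (Fin d) → ℝ)
    (x : EuclideanSpace ℝ (Fin d)) : ℝ :=
  ∑ i : Fin d, fderiv ℝ (fun y => fderiv ℝ f y (EuclideanSpace.single i 1)) x
    (EuclideanSpace.single i 1)

/-- `u` is a classical solution of the fast diffusion equation `∂ₜ u = Δ(u^m)`
on the space-time set `Q`: it is positive and smooth on `Q` and satisfies the
equation pointwise on `Q`. -/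
def IsFDESol {d : ℕ} (m : ℝ) (Q : Set (ℝ × EuclideanSpace ℝ (Fin d)))
    (u : ℝ → EuclideanSpace ℝ (Fin d) → ℝ) : Prop :=
  (∀ p ∈ Q, 0 < u p.1 p.2) ∧
  ContDiffOn ℝ (⊤ : ℕ∞) (fun p : ℝ × EuclideanSpace ℝ (Fin d) => u p.1 p.2) Q ∧
  ∀ p ∈ Q, deriv (fun s => u s p.2) p.1 = spaceLap (fun y => u p.1 y ^ m) p.2

/-- `u` (defined for `0 < t < T` on `Ω`) takes the initial data `u₀`:
it extends continuously to `{0} × Ω` with value `u₀` there. -/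
def TakesInit {d : ℕ} (T : ℝ) (Ω : Set (EuclideanSpace ℝ (Fin d)))
    (u : ℝ → EuclideanSpace ℝ (Fin d) → ℝ) (u₀ : EuclideanSpace ℝ (Fin d) → ℝ) : Prop :=
  ContinuousOn (fun p : ℝ × EuclideanSpace ℝ (Fin d) => u p.1 p.2) (Ico 0 T ×ˢ Ω) ∧
  ∀ x ∈ Ω, u 0 x = u₀ x

/-- `u` has finite extinction time `T` on `Ω`: it extends continuously to
`{T} × Ω` with value `0` there, while `u(t,·)` is not identically zero for `0 < t < T`. -/
def ExtinctAt {d : ℕ} (T : ℝ) (Ω : Set (EuclideanSpace ℝ (Fin d)))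
    (u : ℝ → EuclideanSpace ℝ (Fin d) → ℝ) : Prop :=
  ContinuousOn (fun p : ℝ × EuclideanSpace ℝ (Fin d) => u p.1 p.2) (Ioc 0 T ×ˢ Ω) ∧
  (∀ x ∈ Ω, u T x = 0) ∧
  ∀ t ∈ Ioo 0 T, ∃ x ∈ Ω, u t x ≠ 0

noncomputable def ee {d : ℕ} (i : Fin d) : EuclideanSpace ℝ (Fin d) := EuclideanSpace.single i 1

noncomputable def DD {d : ℕ} (h : ℝ) (φ : EuclideanSpace ℝ (Fin d) → ℝ)
    (x : EuclideanSpace ℝ (Fin d)) : ℝ :=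
  (∑ i : Fin d, (φ (x + h • ee i) - 2 * φ x + φ (x - h • ee i))) / h ^ 2

noncomputable def FF {d : ℕ} (b : ℝ) (G : ℝ → EuclideanSpace ℝ (Fin d) → ℝ) (θ : ℝ)
    (x : EuclideanSpace ℝ (Fin d)) : ℝ := sInf ((fun σ => G σ x) '' Icc b θ)

noncomputable def WW {d : ℕ} (n b : ℝ) (G : ℝ → EuclideanSpace ℝ (Fin d) → ℝ) (θ : ℝ)
    (x : EuclideanSpace ℝ (Fin d)) : ℝ := θ ^ n * FF b G θ x

lemma ac_tele (Z : ℝ → ℝ) (t S A α : ℝ) (htS : t ≤ S) (hA : 0 ≤ A) (hα : 0 ≤ α) (hZ : 0 ≤ Z S)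
    (H : ∀ ε > 0, ∃ δ₀ > 0, ∀ δ, 0 < δ → δ < δ₀ → ∀ θ, t ≤ θ - δ → θ ≤ S →
      Z (θ - δ) ≤ (1 + α * δ) * Z θ + δ * (A + ε)) :
    Z t ≤ Real.exp (α * (S - t)) * (Z S + (S - t) * A) := by
  rcases htS.eq_or_lt with rfl | hlt
  · simp
  have key : ∀ ε > 0, Z t ≤ Real.exp (α * (S - t)) * (Z S + (S - t) * (A + ε)) := by
    intro ε hε
    obtain ⟨δ₀, hδ₀, H⟩ := H ε hε
    obtain ⟨N, hN⟩ := exists_nat_gt ((S - t) / δ₀)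
    have hN0 : (0 : ℝ) < N := lt_of_le_of_lt (by have := sub_pos.2 hlt; positivity) hN
    set δ := (S - t) / N with hδ
    have hδpos : 0 < δ := div_pos (sub_pos.2 hlt) hN0
    have hδlt : δ < δ₀ := by
      rw [hδ, div_lt_iff₀ hN0]
      rw [div_lt_iff₀ hδ₀] at hN
      linarith
    have hNδ : N * δ = S - t := by rw [hδ]; field_simp
    have ind : ∀ k : ℕ, k ≤ N →
        Z (S - k * δ) ≤ (1 + α * δ) ^ k * (Z S + k * δ * (A + ε)) := by
      intro k
      induction k with
      | zero => intro _; simp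
      | succ k ih =>
        intro hk
        have ih := ih (by omega)
        have h1 := H δ hδpos hδlt (S - k * δ) (by
          have : ((k + 1 : ℕ) : ℝ) * δ ≤ N * δ :=
            mul_le_mul_of_nonneg_right (by exact_mod_cast hk) hδpos.le
          push_cast at this
          linarith) (by
          have : 0 ≤ k * δ := by positivity
          linarith)
        have e1 : S - k * δ - δ = S - ((k + 1 : ℕ) : ℝ) * δ := by push_cast; ring
        rw [e1] at h1
        have hp : 1 ≤ 1 + α * δ := by have : 0 ≤ α * δ := by positivity
                                      linarith
        have h2 : (1 + α * δ) * Z (S - k * δ) ≤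
            (1 + α * δ) * ((1 + α * δ) ^ k * (Z S + k * δ * (A + ε))) :=
          mul_le_mul_of_nonneg_left ih (by linarith)
        have h3 : δ * (A + ε) ≤ (1 + α * δ) ^ (k + 1) * (δ * (A + ε)) :=
          le_mul_of_one_le_left (by positivity) (one_le_pow₀ hp)
        calc _ ≤ _ := h1
          _ ≤ (1 + α * δ) * ((1 + α * δ) ^ k * (Z S + k * δ * (A + ε))) +
            (1 + α * δ) ^ (k + 1) * (δ * (A + ε)) := add_le_add h2 h3
          _ = _ := by push_cast; ring
    have h4 := ind N le_rfl
    rw [hNδ] at h4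
    have e2 : S - (S - t) = t := by ring
    rw [e2] at h4
    refine h4.trans (mul_le_mul_of_nonneg_right ?_ ?_)
    · have : 1 + α * δ ≤ Real.exp (α * δ) := by
        have := Real.add_one_le_exp (α * δ); linarith
      calc (1 + α * δ) ^ N ≤ (Real.exp (α * δ)) ^ N := pow_le_pow_left₀ (by positivity) this N
        _ = Real.exp (α * (S - t)) := by
          rw [← Real.exp_nat_mul, ← hNδ]; congr 1; ring
    · have := sub_pos.2 hlt
      positivity
  refine ge_of_tendsto (x := nhdsWithin (0 : ℝ) (Ioi 0))
    (f := fun ε => Real.exp (α * (S - t)) * (Z S + (S - t) * (A + ε))) ?_ ?_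
  · have : Continuous fun ε : ℝ => Real.exp (α * (S - t)) * (Z S + (S - t) * (A + ε)) := by
      fun_prop
    have := (this.tendsto 0).mono_left (nhdsWithin_le_nhds (s := Ioi 0))
    simpa using this
  · filter_upwards [self_mem_nhdsWithin] with ε hε using key ε hε

lemma ac_T1 (g g1 g2 : ℝ → ℝ) (q h : ℝ) (hh : 0 < h)
    (hg : ∀ s ∈ Icc (-h) h, HasDerivAt g (g1 s) s)
    (hg1 : ∀ s ∈ Icc (-h) h, HasDerivAt g1 (g2 s) s)
    (hq : ∀ s ∈ Icc (-h) h, g2 s ≤ q) :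
    g h - 2 * g 0 + g (-h) ≤ q * h ^ 2 := by
  have mem1 : ∀ s ∈ Icc 0 h, s ∈ Icc (-h) h := fun s hs => ⟨by linarith [hs.1], hs.2⟩
  have mem2 : ∀ s ∈ Icc 0 h, -s ∈ Icc (-h) h := fun s hs => ⟨by linarith [hs.2], by linarith [hs.1]⟩
  have d1 : ∀ s ∈ Icc 0 h, HasDerivAt (fun s => g1 s - g1 (-s) - 2 * q * s)
      (g2 s + g2 (-s) - 2 * q) s := by
    intro s hs
    have a := hg1 s (mem1 s hs)
    have b := (hg1 (-s) (mem2 s hs)).comp s (hasDerivAt_neg s)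
    have c := (hasDerivAt_id s).const_mul (2 * q)
    exact ((a.sub b).sub c).congr_deriv (by ring)
  have A1 : AntitoneOn (fun s => g1 s - g1 (-s) - 2 * q * s) (Icc 0 h) := by
    apply antitoneOn_of_deriv_nonpos (convex_Icc _ _)
    · exact fun s hs => (d1 s hs).continuousAt.continuousWithinAt
    · exact fun s hs => (d1 s (interior_subset hs)).differentiableAt.differentiableWithinAt
    · intro s hs
      have hs := interior_subset hs
      rw [(d1 s hs).deriv]
      linarith [hq s (mem1 s hs), hq (-s) (mem2 s hs)]
  have d2 : ∀ s ∈ Icc 0 h, HasDerivAt (fun s => g s + g (-s) - q * s ^ 2)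
      (g1 s - g1 (-s) - 2 * q * s) s := by
    intro s hs
    have a := hg s (mem1 s hs)
    have b := (hg (-s) (mem2 s hs)).comp s (hasDerivAt_neg s)
    have c := ((hasDerivAt_id s).pow 2).const_mul q
    exact ((a.add b).sub c).congr_deriv (by simp; ring)
  have A2 : AntitoneOn (fun s => g s + g (-s) - q * s ^ 2) (Icc 0 h) := by
    apply antitoneOn_of_deriv_nonpos (convex_Icc _ _)
    · exact fun s hs => (d2 s hs).continuousAt.continuousWithinAt
    · exact fun s hs => (d2 s (interior_subset hs)).differentiableAt.differentiableWithinAt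
    · intro s hs
      have hs := interior_subset hs
      rw [(d2 s hs).deriv]
      have := A1 ⟨le_rfl, hh.le⟩ hs hs.1
      simpa using this
  have := A2 ⟨le_rfl, hh.le⟩ ⟨hh.le, le_rfl⟩ hh.le
  simp at this
  linarith

lemma FF_cont {d : ℕ} (b : ℝ) (G : ℝ → EuclideanSpace ℝ (Fin d) → ℝ)
    (hG : Continuous (fun p : ℝ × EuclideanSpace ℝ (Fin d) => G p.1 p.2)) (θ : ℝ) :
    Continuous (FF b G θ) := by
  apply IsCompact.continuous_sInf (f := fun x σ => G σ x) isCompact_Icc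
  exact hG.comp continuous_swap

lemma FF_min {d : ℕ} (b : ℝ) (G : ℝ → EuclideanSpace ℝ (Fin d) → ℝ)
    (hG : Continuous (fun p : ℝ × EuclideanSpace ℝ (Fin d) => G p.1 p.2)) (θ : ℝ) (h : b ≤ θ) (x) :
    ∃ σ ∈ Icc b θ, FF b G θ x = G σ x ∧ ∀ τ ∈ Icc b θ, G σ x ≤ G τ x := by
  have hc : Continuous fun σ => G σ x := hG.comp (by fun_prop : Continuous fun σ : ℝ => (σ, x))
  obtain ⟨σ, h1, h2, h3⟩ := (isCompact_Icc (a := b) (b := θ)).exists_sInf_image_eq_and_le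
    ⟨b, le_rfl, h⟩ hc.continuousOn
  exact ⟨σ, h1, h2, h3⟩

lemma FF_le {d : ℕ} (b : ℝ) (G : ℝ → EuclideanSpace ℝ (Fin d) → ℝ)
    (hG : Continuous (fun p : ℝ × EuclideanSpace ℝ (Fin d) => G p.1 p.2)) (θ : ℝ) (x) (σ)
    (hσ : σ ∈ Icc b θ) : FF b G θ x ≤ G σ x := by
  obtain ⟨τ, h1, h2, h3⟩ := FF_min b G hG θ (hσ.1.trans hσ.2) x
  rw [h2]; exact h3 σ hσ

lemma ac_core {d : ℕ} {m n : ℝ} (hm0 : 0 < m) (hn : n * m + 1 = n) (hn0 : 0 < n) {b S : ℝ}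
    (hb : 0 < b) (hbS : b ≤ S) (K K' : Set (EuclideanSpace ℝ (Fin d)))
    (G : ℝ → EuclideanSpace ℝ (Fin d) → ℝ)
    (hG : Continuous (fun p : ℝ × EuclideanSpace ℝ (Fin d) => G p.1 p.2))
    (hpos : ∀ σ ∈ Icc b S, ∀ x ∈ K, 0 < G σ x) (r : ℝ) (hr : 0 < r)
    (hKK : ∀ x ∈ K', ∀ i, ∀ h, 0 < h → h < r → x + h • ee i ∈ K ∧ x - h • ee i ∈ K)
    (hK'K : K' ⊆ K)
    (hanti : ∀ x ∈ K, ∀ σ σ', b ≤ σ → σ ≤ σ' → σ' ≤ 2 * b → σ' ≤ S → G σ' x ≤ G σ x)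
    (H : ∀ ε > 0, ∃ h₀ > 0, ∀ σ ∈ Icc b S, ∀ τ, 0 < τ → τ < h₀ → b ≤ σ - τ → ∀ h, 0 < h → h < h₀ →
      ∀ x ∈ K', DD h (fun y => (σ ^ n * G σ y) ^ m) x ≤
        (σ ^ n * G σ x - (σ - τ) ^ n * G (σ - τ) x) / τ + ε) :
    ∀ ε > 0, ∃ h₀ > 0, ∀ θ, θ ≤ S → ∀ δ, 0 < δ → δ < h₀ → b ≤ θ - δ → ∀ h, 0 < h → h < h₀ →
      ∀ x ∈ K', DD h (fun y => (WW n b G θ y) ^ m) x ≤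
        (WW n b G θ x - WW n b G (θ - δ) x) / δ + ε := by
  intro ε hε
  have hS : 0 < S := hb.trans_le hbS
  set Λ := (S / b) ^ (n * m) with hΛ
  have hΛ0 : 0 < Λ := by positivity
  obtain ⟨h₀, hh₀, H⟩ := H (ε / Λ) (by positivity)
  refine ⟨min h₀ (min r b), by positivity, ?_⟩
  intro θ hθS δ hδ hδ' hbθ h hh hh' x hx
  simp only [lt_min_iff] at hδ' hh'
  have hθ : 0 < θ := by linarith
  have hθδ : 0 < θ - δ := by linarith
  obtain ⟨σ, hσ1, hσ2, hσ3⟩ : ∃ σ ∈ Icc b θ, FF b G θ x = G σ x ∧ (σ = θ ∨ 2 * b ≤ σ) := by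
    obtain ⟨σ, h1, h2, h3⟩ := FF_min b G hG θ (by linarith) x
    by_cases hc : min θ (2 * b) ≤ σ
    · refine ⟨σ, h1, h2, ?_⟩
      rcases min_le_iff.1 hc with h | h
      · exact Or.inl (le_antisymm h1.2 h)
      · exact Or.inr h
    · push Not at hc
      have hmem : min θ (2 * b) ∈ Icc b θ := ⟨h1.1.trans hc.le, min_le_left _ _⟩
      refine ⟨min θ (2 * b), hmem, ?_, ?_⟩
      · rw [h2]
        apply le_antisymm (h3 _ hmem)
        exact hanti x (hK'K hx) σ _ h1.1 hc.le (min_le_right _ _) ((min_le_left _ _).trans hθS)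
      · rcases le_total θ (2 * b) with h | h
        · left; exact min_eq_left h
        · right; rw [min_eq_right h]
  have hσ0 : 0 < σ := hb.trans_le hσ1.1
  have hσS : σ ∈ Icc b S := ⟨hσ1.1, hσ1.2.trans hθS⟩
  set lam := θ / σ with hlam
  have hlam0 : 0 < lam := by positivity
  have hlam1 : 1 ≤ lam := by rw [hlam, le_div_iff₀ hσ0]; linarith [hσ1.2]
  have hlamS : lam ≤ S / b := div_le_div₀ hS.le hθS hb hσ1.1
  set τ := δ / lam with hτ
  have hτ0 : 0 < τ := by positivity
  have hτδ : τ ≤ δ := div_le_self hδ.le hlam1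
  have hτb : b ≤ σ - τ := by
    rcases hσ3 with h | h
    · rw [h]; linarith
    · linarith [hδ'.2.2]
  have eθ : θ = lam * σ := by rw [hlam]; field_simp
  have eδ : δ = lam * τ := by rw [hτ]; field_simp
  have eθδ : θ - δ = lam * (σ - τ) := by rw [eθ, eδ]; ring
  have hστ0 : 0 < σ - τ := by linarith
  have h1 := H σ hσS τ hτ0 (hτδ.trans_lt hδ'.1) hτb h hh hh'.1 x hx
  have hW : WW n b G θ x = lam ^ n * (σ ^ n * G σ x) := by
    rw [WW, hσ2, eθ, Real.mul_rpow hlam0.le hσ0.le]; ring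
  have hW' : WW n b G (θ - δ) x ≤ lam ^ n * ((σ - τ) ^ n * G (σ - τ) x) := by
    rw [WW, eθδ, Real.mul_rpow hlam0.le hστ0.le, mul_assoc]
    have : FF b G (lam * (σ - τ)) x ≤ G (σ - τ) x :=
      FF_le b G hG _ x _ ⟨hτb, le_mul_of_one_le_left hστ0.le hlam1⟩
    gcongr
  have hle : ∀ y ∈ K, (WW n b G θ y) ^ m ≤ lam ^ (n * m) * (σ ^ n * G σ y) ^ m := by
    intro y hy
    have hF : FF b G θ y ≤ G σ y := FF_le b G hG _ y _ hσ1
    have hF0 : 0 ≤ FF b G θ y := by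
      obtain ⟨s, h1, h2, h3⟩ := FF_min b G hG θ (by linarith) y
      rw [h2]; exact (hpos s ⟨h1.1, h1.2.trans hθS⟩ y hy).le
    rw [Real.rpow_mul hlam0.le, ← Real.mul_rpow (by positivity)
      (mul_nonneg (by positivity) (hF0.trans hF)), ← mul_assoc,
      ← Real.mul_rpow hlam0.le hσ0.le, ← eθ, WW]
    apply Real.rpow_le_rpow (mul_nonneg (by positivity) hF0) _ hm0.le
    gcongr
  have heq : (WW n b G θ x) ^ m = lam ^ (n * m) * (σ ^ n * G σ x) ^ m := by
    have : 0 ≤ G σ x := (hpos σ hσS x (hK'K hx)).le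
    rw [hW, Real.mul_rpow (by positivity) (by positivity), Real.rpow_mul hlam0.le]
  have hDD : DD h (fun y => (WW n b G θ y) ^ m) x ≤
      lam ^ (n * m) * DD h (fun y => (σ ^ n * G σ y) ^ m) x := by
    rw [DD, DD, mul_div_assoc', Finset.mul_sum]
    gcongr with i
    rw [heq]
    have := hle _ (hKK x hx i h hh hh'.2.1).1
    have := hle _ (hKK x hx i h hh hh'.2.1).2
    linarith
  have hlamn : lam ^ n = lam ^ (n * m) * lam := by
    rw [← Real.rpow_add_one hlam0.ne', hn]
  refine hDD.trans ((mul_le_mul_of_nonneg_left h1 (by positivity)).trans ?_)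
  have hlL : lam ^ (n * m) ≤ Λ := Real.rpow_le_rpow hlam0.le hlamS (by positivity)
  have h5 : lam ^ (n * m) * (ε / Λ) ≤ ε := by
    calc _ ≤ Λ * (ε / Λ) := by gcongr
      _ = ε := by field_simp
  have h6 : lam ^ (n * m) * ((σ ^ n * G σ x - (σ - τ) ^ n * G (σ - τ) x) / τ) ≤
      (WW n b G θ x - WW n b G (θ - δ) x) / δ := by
    rw [le_div_iff₀ hδ]
    calc _ = lam ^ n * (σ ^ n * G σ x) - lam ^ n * ((σ - τ) ^ n * G (σ - τ) x) := by
          rw [hlamn, eδ]; field_simp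
      _ ≤ _ := by rw [hW]; linarith
  rw [mul_add]
  linarith

structure Tst {d : ℕ} (x₀ : EuclideanSpace ℝ (Fin d)) (R : ℝ)
    (φ L : EuclideanSpace ℝ (Fin d) → ℝ) : Prop where
  cont : Continuous φ
  contL : Continuous L
  nonneg : ∀ x, 0 ≤ φ x
  supp : ∀ x, 5 / 2 * R < dist x x₀ → φ x = 0
  suppL : ∀ x, 5 / 2 * R < dist x x₀ → L x = 0
  conv : ∀ ε > 0, ∃ h₀ > 0, ∀ h, 0 < h → h < h₀ → ∀ x, |DD h φ x - L x| ≤ ε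

lemma ee_norm {d : ℕ} (i : Fin d) : ‖(ee i : EuclideanSpace ℝ (Fin d))‖ = 1 := by
  simp [ee]

lemma DD_le {d : ℕ} (φ : EuclideanSpace ℝ (Fin d) → ℝ) (P Q : Fin d → EuclideanSpace ℝ (Fin d) → ℝ)
    (x : EuclideanSpace ℝ (Fin d)) (h : ℝ) (hh : 0 < h) (q : Fin d → ℝ)
    (hφ : ∀ i, ∀ s ∈ Icc (-h) h,
      HasDerivAt (fun r : ℝ => φ (x + s • ee i + r • ee i)) (P i (x + s • ee i)) 0)
    (hP : ∀ i, ∀ s ∈ Icc (-h) h,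
      HasDerivAt (fun r : ℝ => P i (x + s • ee i + r • ee i)) (Q i (x + s • ee i)) 0)
    (hq : ∀ i, ∀ s ∈ Icc (-h) h, Q i (x + s • ee i) ≤ q i) :
    DD h φ x ≤ ∑ i, q i := by
  rw [DD, div_le_iff₀ (by positivity), Finset.sum_mul]
  apply Finset.sum_le_sum
  intro i _
  have shift : ∀ (f : EuclideanSpace ℝ (Fin d) → ℝ) (s c : ℝ),
      HasDerivAt (fun r : ℝ => f (x + s • ee i + r • ee i)) c 0 →
      HasDerivAt (fun r : ℝ => f (x + r • ee i)) c s := by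
    intro f s c hf
    have h1 : HasDerivAt (fun r : ℝ => f (x + s • ee i + r • ee i)) c (s - s) := by simpa using hf
    have h2 := h1.comp_sub_const s s
    refine h2.congr_of_eventuallyEq (Filter.Eventually.of_forall fun r => ?_)
    simp only
    congr 1
    rw [sub_smul]; abel
  have := ac_T1 (fun r => φ (x + r • ee i)) (fun r => P i (x + r • ee i))
    (fun r => Q i (x + r • ee i)) (q i) h hh (fun s hs => shift _ _ _ (hφ i s hs))
    (fun s hs => shift _ _ _ (hP i s hs)) (hq i)
  simpa [sub_eq_add_neg] using this

lemma DD_neg {d : ℕ} (h : ℝ) (φ : EuclideanSpace ℝ (Fin d) → ℝ) (x) :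
    DD h (fun y => - φ y) x = - DD h φ x := by
  rw [DD, DD, ← neg_div, ← Finset.sum_neg_distrib]
  congr 1
  apply Finset.sum_congr rfl
  intros; ring

lemma coord_deriv {d : ℕ} (x₀ x : EuclideanSpace ℝ (Fin d)) (i : Fin d) :
    HasDerivAt (fun r : ℝ => (x + r • ee i - x₀) i) 1 0 := by
  have : (fun r : ℝ => (x + r • ee i - x₀) i) = fun r => (x - x₀) i + r := by
    funext r
    simp [ee]; ring
  rw [this]
  exact (hasDerivAt_id 0).const_add _

lemma normsq_deriv {d : ℕ} (x₀ x : EuclideanSpace ℝ (Fin d)) (i : Fin d) :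
    HasDerivAt (fun r : ℝ => ‖x + r • ee i - x₀‖ ^ 2) (2 * (x - x₀) i) 0 := by
  have : (fun r : ℝ => ‖x + r • ee i - x₀‖ ^ 2) =
      fun r => ‖x - x₀‖ ^ 2 + (2 * (x - x₀) i) * r + r ^ 2 := by
    funext r
    have e : x + r • ee i - x₀ = (x - x₀) + r • ee i := by abel
    rw [e, norm_add_sq_real, norm_smul, ee_norm, inner_smul_right]
    have : inner ℝ (x - x₀) (ee i) = (x - x₀) i := by
      simp [ee, EuclideanSpace.inner_single_right]
    rw [this]; simp; ring
  rw [this]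
  have h1 := ((hasDerivAt_id (0 : ℝ)).const_mul (2 * (x - x₀) i)).const_add (‖x - x₀‖ ^ 2)
  exact (h1.add ((hasDerivAt_id (0 : ℝ)).pow 2)).congr_deriv (by simp)

lemma radial_test {d : ℕ} (x₀ : EuclideanSpace ℝ (Fin d)) (R : ℝ) (hR : 0 < R) (g g1 g2 : ℝ → ℝ)
    (hg : ∀ s, 0 ≤ s → HasDerivAt g (g1 s) s) (hg1 : ∀ s, 0 ≤ s → HasDerivAt g1 (g2 s) s)
    (hg2 : ContinuousOn g2 (Ici 0)) (h0 : ∀ s, 0 ≤ s → 0 ≤ g s)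
    (hs : ∀ s, 6 * R ^ 2 ≤ s → g s = 0 ∧ g1 s = 0 ∧ g2 s = 0) :
    Tst x₀ R (fun x => g (‖x - x₀‖ ^ 2))
      (fun x => 2 * d * g1 (‖x - x₀‖ ^ 2) + 4 * ‖x - x₀‖ ^ 2 * g2 (‖x - x₀‖ ^ 2)) := by
  have hn : Continuous fun x : EuclideanSpace ℝ (Fin d) => ‖x - x₀‖ ^ 2 := by fun_prop
  have cg : ∀ f : ℝ → ℝ, ContinuousOn f (Ici 0) →
      Continuous fun x : EuclideanSpace ℝ (Fin d) => f (‖x - x₀‖ ^ 2) := fun f hf =>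
    hf.comp_continuous hn (fun x => by simp only [mem_Ici]; positivity)
  have c0 := cg g fun s hs => (hg s hs).continuousAt.continuousWithinAt
  have c1 := cg g1 fun s hs => (hg1 s hs).continuousAt.continuousWithinAt
  have c2 := cg g2 hg2
  have out : ∀ x, 5 / 2 * R < dist x x₀ → 6 * R ^ 2 ≤ ‖x - x₀‖ ^ 2 := by
    intro x hx
    rw [dist_eq_norm] at hx
    nlinarith
  set P : Fin d → EuclideanSpace ℝ (Fin d) → ℝ := fun i x =>
    2 * (x - x₀) i * g1 (‖x - x₀‖ ^ 2) with hP
  set Q : Fin d → EuclideanSpace ℝ (Fin d) → ℝ := fun i x =>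
    2 * g1 (‖x - x₀‖ ^ 2) + 4 * ((x - x₀) i) ^ 2 * g2 (‖x - x₀‖ ^ 2) with hQ
  have dφ : ∀ i x, HasDerivAt (fun r : ℝ => g (‖x + r • ee i - x₀‖ ^ 2)) (P i x) 0 := by
    intro i x
    have a := normsq_deriv x₀ x i
    have b : HasDerivAt g (g1 (‖x - x₀‖ ^ 2)) (‖x + (0 : ℝ) • ee i - x₀‖ ^ 2) := by
      simpa using hg (‖x - x₀‖ ^ 2) (by positivity)
    exact (b.comp 0 a).congr_deriv (by simp only [hP]; ring)
  have dP : ∀ i x, HasDerivAt (fun r : ℝ => P i (x + r • ee i)) (Q i x) 0 := by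
    intro i x
    have a := normsq_deriv x₀ x i
    have b : HasDerivAt g1 (g2 (‖x - x₀‖ ^ 2)) (‖x + (0 : ℝ) • ee i - x₀‖ ^ 2) := by
      simpa using hg1 (‖x - x₀‖ ^ 2) (by positivity)
    have c := ((coord_deriv x₀ x i).const_mul 2).mul (b.comp 0 a)
    exact c.congr_deriv (by simp [hQ]; ring)
  have sumQ : ∀ x, ∑ i, Q i x =
      2 * d * g1 (‖x - x₀‖ ^ 2) + 4 * ‖x - x₀‖ ^ 2 * g2 (‖x - x₀‖ ^ 2) := by
    intro x
    have : ‖x - x₀‖ ^ 2 = ∑ i, ((x - x₀) i) ^ 2 := by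
      rw [EuclideanSpace.norm_sq_eq]; simp
    simp only [hQ]
    rw [Finset.sum_add_distrib, ← Finset.sum_mul, ← Finset.sum_mul, ← Finset.mul_sum, ← this]
    simp only [Finset.sum_const, Finset.card_univ, Fintype.card_fin, nsmul_eq_mul]; ring
  have uQ : ∀ i, UniformContinuous (Q i) := by
    intro i
    have cc : Continuous (Q i) := by
      have : Continuous fun x : EuclideanSpace ℝ (Fin d) => (x - x₀) i := by fun_prop
      exact (continuous_const.mul c1).add ((continuous_const.mul (this.pow 2)).mul c2)
    apply cc.uniformContinuous_of_tendsto_cocompact (x := 0)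
    apply HasCompactSupport.is_zero_at_infty
    apply HasCompactSupport.intro (isCompact_closedBall x₀ (5 / 2 * R))
    intro x hx
    have := hs _ (out x (by simpa using hx))
    simp [hQ, this]
  refine ⟨c0, ?_, fun x => h0 _ (by positivity), ?_, ?_, ?_⟩
  · exact (continuous_const.mul c1).add ((continuous_const.mul hn).mul c2)
  · intro x hx; exact (hs _ (out x hx)).1
  · intro x hx; simp [hs _ (out x hx)]
  · intro ε hε
    have : ∀ i, ∃ h₀ > 0, ∀ x y, dist x y < h₀ → |Q i x - Q i y| ≤ ε / (d + 1) := by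
      intro i
      obtain ⟨δ, h1, h2⟩ := Metric.uniformContinuous_iff.1 (uQ i) (ε / (d + 1)) (by positivity)
      exact ⟨δ, h1, fun x y h => (h2 h).le⟩
    choose η hη0 hη using this
    obtain ⟨h₀, hh₀, hh⟩ : ∃ h₀ > 0, ∀ i, h₀ ≤ η i := by
      rcases isEmpty_or_nonempty (Fin d) with h | h
      · exact ⟨1, one_pos, fun i => h.elim i⟩
      · obtain ⟨j, hj⟩ := Finite.exists_min η
        exact ⟨η j, hη0 j, hj⟩
    refine ⟨h₀, hh₀, fun h hpos hlt x => ?_⟩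
    have close : ∀ i, ∀ s ∈ Icc (-h) h, |Q i (x + s • ee i) - Q i x| ≤ ε / (d + 1) := by
      intro i s hs
      apply hη
      rw [dist_eq_norm]
      simp only [add_sub_cancel_left, norm_smul, ee_norm, mul_one, Real.norm_eq_abs]
      exact (abs_le.2 hs).trans_lt (hlt.trans_le (hh i))
    have hsum : ∑ i : Fin d, ε / ((d : ℝ) + 1) ≤ ε := by
      simp
      rw [mul_div_assoc', div_le_iff₀ (by positivity)]
      nlinarith
    have up := DD_le (fun x => g (‖x - x₀‖ ^ 2)) P Q x h hpos (fun i => Q i x + ε / (d + 1))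
      (fun i s _ => dφ i _) (fun i s _ => dP i _)
      (fun i s hs => by linarith [(abs_le.1 (close i s hs)).2])
    have lo := DD_le (fun x => - g (‖x - x₀‖ ^ 2)) (fun i x => - P i x) (fun i x => - Q i x)
      x h hpos (fun i => - Q i x + ε / (d + 1))
      (fun i s _ => (dφ i _).neg) (fun i s _ => (dP i _).neg)
      (fun i s hs => by linarith [(abs_le.1 (close i s hs)).1])
    rw [DD_neg] at lo
    rw [Finset.sum_add_distrib] at up lo
    rw [Finset.sum_neg_distrib] at lo
    rw [sumQ] at up lo
    rw [abs_le]
    constructor <;> linarith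

lemma tst_int {d : ℕ} {x₀ : EuclideanSpace ℝ (Fin d)} {R : ℝ}
    {f : EuclideanSpace ℝ (Fin d) → ℝ} (hf : Continuous f)
    (h : ∀ x, R < dist x x₀ → f x = 0) : Integrable f :=
  hf.integrable_of_hasCompactSupport
    (HasCompactSupport.intro (isCompact_closedBall x₀ R) fun x hx => h x (by simpa using hx))

lemma DD_cont {d : ℕ} (h : ℝ) {f : EuclideanSpace ℝ (Fin d) → ℝ} (hf : Continuous f) :
    Continuous (DD h f) := by
  unfold DD
  fun_prop

lemma DD_symm {d : ℕ} {x₀ : EuclideanSpace ℝ (Fin d)} {r h : ℝ}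
    {w φ : EuclideanSpace ℝ (Fin d) → ℝ} (hw : Continuous w) (hφ : Continuous φ)
    (hs : ∀ x, r < dist x x₀ → φ x = 0) :
    ∫ x, w x * DD h φ x = ∫ x, φ x * DD h w x := by
  have I : ∀ v : EuclideanSpace ℝ (Fin d), Integrable fun x => w x * φ (x + v) := by
    intro v
    apply tst_int (x₀ := x₀ - v) (R := r) (by fun_prop)
    intro x hx
    rw [hs _ (by rw [dist_eq_norm] at *; convert hx using 2; abel), mul_zero]
  have I' : ∀ v : EuclideanSpace ℝ (Fin d), Integrable fun x => φ x * w (x + v) := by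
    intro v
    apply tst_int (x₀ := x₀) (R := r) (by fun_prop)
    intro x hx
    rw [hs _ hx, zero_mul]
  have tr : ∀ v : EuclideanSpace ℝ (Fin d), ∫ x, w x * φ (x + v) = ∫ x, φ x * w (x + (-v)) := by
    intro v
    rw [← integral_sub_right_eq_self _ v]
    congr 1; funext x
    rw [sub_add_cancel, sub_eq_add_neg, mul_comm]
  have e1 : ∀ x, w x * DD h φ x = (∑ i, (w x * φ (x + h • ee i) - 2 * (w x * φ (x + 0)) +
      w x * φ (x + -(h • ee i)))) / h ^ 2 := by
    intro x
    rw [DD, mul_div_assoc', Finset.mul_sum]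
    congr 1
    apply Finset.sum_congr rfl
    intro i _
    rw [add_zero, sub_eq_add_neg x]; ring
  have e2 : ∀ x, φ x * DD h w x = (∑ i, (φ x * w (x + h • ee i) - 2 * (φ x * w (x + 0)) +
      φ x * w (x + -(h • ee i)))) / h ^ 2 := by
    intro x
    rw [DD, mul_div_assoc', Finset.mul_sum]
    congr 1
    apply Finset.sum_congr rfl
    intro i _
    rw [add_zero, sub_eq_add_neg x]; ring
  simp_rw [e1, e2]
  rw [integral_div, integral_div, integral_finsetSum, integral_finsetSum]
  · congr 1
    apply Finset.sum_congr rfl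
    intro i _
    rw [integral_add, integral_add, integral_sub, integral_sub, integral_const_mul,
      integral_const_mul, tr, tr, tr]
    · simp; ring
    all_goals first | exact I' _ | exact I _ | exact (I _).const_mul 2 | exact (I' _).const_mul 2 |
      exact (I _).sub ((I _).const_mul 2) | exact (I' _).sub ((I' _).const_mul 2)
  · intro i _
    exact ((I' _).sub ((I' _).const_mul 2)).add (I' _)
  · intro i _
    exact ((I _).sub ((I _).const_mul 2)).add (I _)

lemma ac_int {d : ℕ} {x₀ : EuclideanSpace ℝ (Fin d)} {R : ℝ} (hR : 0 < R)
    {w φ L B : EuclideanSpace ℝ (Fin d) → ℝ} (hw : Continuous w) (hB : Continuous B)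
    (hφ : Tst x₀ R φ L)
    (H : ∃ h₀ > 0, ∀ h, 0 < h → h < h₀ → ∀ x ∈ closedBall x₀ (5 / 2 * R), DD h w x ≤ B x) :
    ∫ x, w x * L x ≤ ∫ x, φ x * B x := by
  obtain ⟨h₀, hh₀, H⟩ := H
  set C := ∫ x in closedBall x₀ (3 * R), |w x| with hC
  have hC0 : 0 ≤ C := integral_nonneg fun x => abs_nonneg _
  have Iabs : Integrable ((closedBall x₀ (3 * R)).indicator fun x => |w x|) := by
    rw [integrable_indicator_iff measurableSet_closedBall]
    exact hw.abs.continuousOn.integrableOn_compact (isCompact_closedBall _ _)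
  refine le_of_forall_pos_le_add fun ε hε => ?_
  obtain ⟨h₁, hh₁, H1⟩ := hφ.conv (ε / (C + 1)) (by positivity)
  obtain ⟨h, hh, hlt⟩ := exists_between (show 0 < min (min h₀ h₁) (R / 2) by positivity)
  simp only [lt_min_iff] at hlt
  have DDs : ∀ x, 3 * R < dist x x₀ → DD h φ x = 0 := by
    intro x hx
    rw [dist_eq_norm] at hx
    have hn : ∀ i : Fin d, ‖h • (ee i : EuclideanSpace ℝ (Fin d))‖ ≤ R / 2 := by
      intro i
      rw [norm_smul, ee_norm, Real.norm_eq_abs, abs_of_pos hh]; linarith [hlt.2]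
    have z0 : φ x = 0 := hφ.supp x (by rw [dist_eq_norm]; linarith)
    have z1 : ∀ i, φ (x + h • ee i) = 0 := fun i => hφ.supp _ (by
      rw [dist_eq_norm]
      have := norm_sub_le (x + h • ee i - x₀) (h • ee i)
      rw [show x + h • ee i - x₀ - h • ee i = x - x₀ by abel] at this
      linarith [hn i])
    have z2 : ∀ i, φ (x - h • ee i) = 0 := fun i => hφ.supp _ (by
      rw [dist_eq_norm]
      have := norm_add_le (x - h • ee i - x₀) (h • ee i)
      rw [show x - h • ee i - x₀ + h • ee i = x - x₀ by abel] at this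
      linarith [hn i])
    simp [DD, z0, z1, z2]
  have I1 : Integrable fun x => w x * L x := tst_int (x₀ := x₀) (R := 5 / 2 * R)
    (hw.mul hφ.contL) fun x hx => by rw [hφ.suppL x hx, mul_zero]
  have I2 : Integrable fun x => w x * DD h φ x := tst_int (x₀ := x₀) (R := 3 * R)
    (hw.mul (DD_cont h hφ.cont)) fun x hx => by rw [DDs x hx, mul_zero]
  have I3 : Integrable fun x => φ x * DD h w x := tst_int (x₀ := x₀) (R := 5 / 2 * R)
    (hφ.cont.mul (DD_cont h hw)) fun x hx => by rw [hφ.supp x hx, zero_mul]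
  have I4 : Integrable fun x => φ x * B x := tst_int (x₀ := x₀) (R := 5 / 2 * R)
    (hφ.cont.mul hB) fun x hx => by rw [hφ.supp x hx, zero_mul]
  calc ∫ x, w x * L x ≤ ∫ x, (w x * DD h φ x +
        ε / (C + 1) * (closedBall x₀ (3 * R)).indicator (fun x => |w x|) x) := by
        apply integral_mono I1 (I2.add (Iabs.const_mul _))
        intro x
        simp only [Pi.add_apply]
        by_cases hx : x ∈ closedBall x₀ (3 * R)
        · rw [indicator_of_mem hx]
          have h1 := H1 h hh hlt.1.2 x
          have h2 : |w x * (DD h φ x - L x)| ≤ |w x| * (ε / (C + 1)) := by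
            rw [abs_mul]; gcongr
          have := (abs_le.1 h2).1
          linarith
        · rw [indicator_of_notMem hx]
          have hx : 3 * R < dist x x₀ := by simpa using hx
          rw [DDs x hx, hφ.suppL x (by linarith)]; simp
    _ = (∫ x, w x * DD h φ x) + ε / (C + 1) * C := by
        rw [integral_add I2 (Iabs.const_mul _), integral_const_mul,
          integral_indicator measurableSet_closedBall]
    _ ≤ (∫ x, φ x * B x) + ε := by
        have h1 : ∫ x, w x * DD h φ x ≤ ∫ x, φ x * B x := by
          rw [DD_symm hw hφ.cont hφ.supp]
          apply integral_mono I3 I4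
          intro x
          by_cases hx : x ∈ closedBall x₀ (5 / 2 * R)
          · exact mul_le_mul_of_nonneg_left (H h hh hlt.1.1 x hx) (hφ.nonneg x)
          · simp [hφ.supp x (by simpa using hx)]
        have h2 : ε / (C + 1) * C ≤ ε := by
          rw [div_mul_eq_mul_div, div_le_iff₀ (by positivity)]
          nlinarith
        linarith

lemma WW_cont {d : ℕ} (n b : ℝ) (G : ℝ → EuclideanSpace ℝ (Fin d) → ℝ)
    (hG : Continuous (fun p : ℝ × EuclideanSpace ℝ (Fin d) => G p.1 p.2)) (θ : ℝ) :
    Continuous (WW n b G θ) := continuous_const.mul (FF_cont b G hG θ)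

lemma ac_step {d : ℕ} {m n b S R : ℝ} (hm0 : 0 < m) (hR : 0 < R)
    {x₀ : EuclideanSpace ℝ (Fin d)} {φ L : EuclideanSpace ℝ (Fin d) → ℝ}
    (G : ℝ → EuclideanSpace ℝ (Fin d) → ℝ)
    (hG : Continuous (fun p : ℝ × EuclideanSpace ℝ (Fin d) => G p.1 p.2))
    (hφ : Tst x₀ R φ L)
    (HW : ∀ ε > 0, ∃ h₀ > 0, ∀ θ, θ ≤ S → ∀ δ, 0 < δ → δ < h₀ → b ≤ θ - δ → ∀ h, 0 < h → h < h₀ →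
      ∀ x ∈ closedBall x₀ (5 / 2 * R), DD h (fun y => (WW n b G θ y) ^ m) x ≤
        (WW n b G θ x - WW n b G (θ - δ) x) / δ + ε) :
    ∀ ε > 0, ∃ δ₀ > 0, ∀ δ, 0 < δ → δ < δ₀ → ∀ θ, b ≤ θ - δ → θ ≤ S →
      ∫ x, φ x * WW n b G (θ - δ) x ≤ (∫ x, φ x * WW n b G θ x) +
        δ * (- (∫ x, WW n b G θ x ^ m * L x) + ε) := by
  intro ε hε
  set C := ∫ x, φ x with hC
  have hC0 : 0 ≤ C := integral_nonneg hφ.nonneg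
  obtain ⟨h₀, hh₀, H⟩ := HW (ε / (C + 1)) (by positivity)
  refine ⟨h₀, hh₀, fun δ hδ hδ' θ h1 h2 => ?_⟩
  have cW := WW_cont n b G hG
  have hI : ∀ f : EuclideanSpace ℝ (Fin d) → ℝ, Continuous f → Integrable fun x => φ x * f x :=
    fun f hf => tst_int (x₀ := x₀) (R := 5 / 2 * R)
      (hφ.cont.mul hf) fun x hx => by rw [hφ.supp x hx, zero_mul]
  have key := ac_int hR (w := fun y => (WW n b G θ y) ^ m)
    (B := fun x => (WW n b G θ x - WW n b G (θ - δ) x) / δ + ε / (C + 1))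
    ((cW θ).rpow_const fun _ => Or.inr hm0.le)
    ((((cW θ).sub (cW (θ - δ))).div_const δ).add continuous_const) hφ
    ⟨h₀, hh₀, fun h hh hh' x hx => H θ h2 δ hδ hδ' h1 h hh hh' x hx⟩
  have e : ∫ x, φ x * ((WW n b G θ x - WW n b G (θ - δ) x) / δ + ε / (C + 1)) =
      ((∫ x, φ x * WW n b G θ x) - ∫ x, φ x * WW n b G (θ - δ) x) / δ + C * (ε / (C + 1)) := by
    have : ∀ x, φ x * ((WW n b G θ x - WW n b G (θ - δ) x) / δ + ε / (C + 1)) =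
      (φ x * WW n b G θ x - φ x * WW n b G (θ - δ) x) / δ + φ x * (ε / (C + 1)) := by
      intro x; ring
    simp_rw [this]
    rw [integral_add, integral_div, integral_sub (hI _ (cW _)) (hI _ (cW _)), integral_mul_const]
    · exact ((hI _ (cW _)).sub (hI _ (cW _))).div_const δ
    · exact hI _ continuous_const
  rw [e] at key
  have h5 : C * (ε / (C + 1)) ≤ ε := by
    rw [mul_div_assoc', div_le_iff₀ (by positivity)]
    nlinarith
  have h6 : (∫ x, WW n b G θ x ^ m * L x) - ε ≤
      ((∫ x, φ x * WW n b G θ x) - ∫ x, φ x * WW n b G (θ - δ) x) / δ := by linarith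
  rw [le_div_iff₀ hδ] at h6
  linarith

lemma ac_green {d : ℕ} {m n b S R t : ℝ} (hm0 : 0 < m) (hn : n * m + 1 = n) (hn0 : 0 < n)
    (hb : 0 < b) (hR : 0 < R)
    {x₀ : EuclideanSpace ℝ (Fin d)} {φ L ψ : EuclideanSpace ℝ (Fin d) → ℝ}
    (G : ℝ → EuclideanSpace ℝ (Fin d) → ℝ)
    (hG : Continuous (fun p : ℝ × EuclideanSpace ℝ (Fin d) => G p.1 p.2))
    (hφ : Tst x₀ R φ L)
    (HW : ∀ ε > 0, ∃ h₀ > 0, ∀ θ, θ ≤ S → ∀ δ, 0 < δ → δ < h₀ → b ≤ θ - δ → ∀ h, 0 < h → h < h₀ →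
      ∀ x ∈ closedBall x₀ (5 / 2 * R), DD h (fun y => (WW n b G θ y) ^ m) x ≤
        (WW n b G θ x - WW n b G (θ - δ) x) / δ + ε)
    (hpos : ∀ σ ∈ Icc b S, ∀ x ∈ closedBall x₀ (3 * R), 0 < G σ x)
    (hψc : Continuous ψ) (hψ0 : ∀ x, 0 ≤ ψ x) (hψs : ∀ x, 5 / 2 * R < dist x x₀ → ψ x = 0)
    (hLψ : ∀ x, - ψ x ≤ L x) (hbt : b ≤ t) (htS : t ≤ S) :
    ∫ x, φ x * WW n b G t x ≤ (∫ x, φ x * WW n b G S x) +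
      S * (S / t) ^ (n * m) * ∫ x, WW n b G t x ^ m * ψ x := by
  have ht : 0 < t := hb.trans_le hbt
  have hS : 0 < S := ht.trans_le htS
  have cW := WW_cont n b G hG
  have cWm : ∀ θ, Continuous fun x => WW n b G θ x ^ m := fun θ =>
    (cW θ).rpow_const fun _ => Or.inr hm0.le
  have FF0 : ∀ θ, b ≤ θ → θ ≤ S → ∀ x, dist x x₀ ≤ 5 / 2 * R → 0 ≤ FF b G θ x := by
    intro θ h1 h2 x hx
    obtain ⟨σ, h3, h4, _⟩ := FF_min b G hG θ h1 x
    rw [h4]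
    exact (hpos σ ⟨h3.1, h3.2.trans h2⟩ x (by rw [mem_closedBall]; linarith)).le
  have WW0 : ∀ θ, b ≤ θ → θ ≤ S → ∀ x, dist x x₀ ≤ 5 / 2 * R → 0 ≤ WW n b G θ x := by
    intro θ h1 h2 x hx
    have := FF0 θ h1 h2 x hx
    have : 0 < θ := by linarith
    rw [WW]; positivity
  have IW : ∀ θ, Integrable fun x => WW n b G θ x ^ m * ψ x := fun θ =>
    tst_int (x₀ := x₀) (R := 5 / 2 * R)
      ((cWm θ).mul hψc) fun x hx => by rw [hψs x hx, mul_zero]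
  have IL : ∀ θ, Integrable fun x => WW n b G θ x ^ m * L x := fun θ =>
    tst_int (x₀ := x₀) (R := 5 / 2 * R)
      ((cWm θ).mul hφ.contL) fun x hx => by rw [hφ.suppL x hx, mul_zero]
  set J := ∫ x, WW n b G t x ^ m * ψ x with hJ
  have hJ0 : 0 ≤ J := by
    apply integral_nonneg
    intro x
    by_cases hx : dist x x₀ ≤ 5 / 2 * R
    · exact mul_nonneg (Real.rpow_nonneg (WW0 t hbt htS x hx) _) (hψ0 x)
    · simp [hψs x (not_le.1 hx)]
  have bound : ∀ θ, t ≤ θ → θ ≤ S →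
      - (∫ x, WW n b G θ x ^ m * L x) ≤ (S / t) ^ (n * m) * J := by
    intro θ h1 h2
    rw [← integral_neg, hJ, ← integral_const_mul]
    apply integral_mono (IL θ).neg ((IW t).const_mul _)
    intro x
    simp only [Pi.neg_apply]
    by_cases hx : dist x x₀ ≤ 5 / 2 * R
    · have hθ : 0 < θ := ht.trans_le h1
      have a1 : WW n b G θ x ≤ (S / t) ^ n * WW n b G t x := by
        have f1 : FF b G θ x ≤ FF b G t x := by
          obtain ⟨σ, h3, h4, _⟩ := FF_min b G hG t hbt x
          rw [h4]
          exact FF_le b G hG θ x σ ⟨h3.1, h3.2.trans h1⟩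
        rw [WW, WW, ← mul_assoc, ← Real.mul_rpow (by positivity) ht.le, div_mul_cancel₀ _ ht.ne']
        have := FF0 θ (hbt.trans h1) h2 x hx
        gcongr
      have a2 : WW n b G θ x ^ m ≤ (S / t) ^ (n * m) * WW n b G t x ^ m := by
        rw [Real.rpow_mul (by positivity), ← Real.mul_rpow (by positivity) (WW0 t hbt htS x hx)]
        exact Real.rpow_le_rpow (WW0 θ (hbt.trans h1) h2 x hx) a1 hm0.le
      have a0 : 0 ≤ WW n b G θ x ^ m := Real.rpow_nonneg (WW0 θ (hbt.trans h1) h2 x hx) _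
      calc -(WW n b G θ x ^ m * L x) ≤ WW n b G θ x ^ m * ψ x := by
            have := mul_le_mul_of_nonneg_left (hLψ x) a0
            linarith
        _ ≤ (S / t) ^ (n * m) * WW n b G t x ^ m * ψ x :=
            mul_le_mul_of_nonneg_right a2 (hψ0 x)
        _ = _ := by ring
    · simp [hψs x (not_le.1 hx), hφ.suppL x (not_le.1 hx)]
  have hZS : 0 ≤ ∫ x, φ x * WW n b G S x := by
    apply integral_nonneg
    intro x
    by_cases hx : dist x x₀ ≤ 5 / 2 * R
    · exact mul_nonneg (hφ.nonneg x) (WW0 S (hbt.trans htS) le_rfl x hx)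
    · simp [hφ.supp x (not_le.1 hx)]
  have key := ac_tele (fun θ => ∫ x, φ x * WW n b G θ x) t S ((S / t) ^ (n * m) * J) 0 htS
    (by positivity) le_rfl hZS (by
      intro ε hε
      obtain ⟨δ₀, hδ₀, H⟩ := ac_step hm0 hR G hG hφ HW ε hε
      refine ⟨δ₀, hδ₀, fun δ hδ hδ' θ h1 h2 => ?_⟩
      have h3 := H δ hδ hδ' θ (by linarith) h2
      have h4 := bound θ (by linarith) h2
      have : δ * (- (∫ x, WW n b G θ x ^ m * L x) + ε) ≤ δ * ((S / t) ^ (n * m) * J + ε) := by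
        gcongr
      simp only [zero_mul, add_zero, one_mul]
      linarith)
  simp only [zero_mul, Real.exp_zero, one_mul] at key
  refine key.trans ?_
  have : (S - t) * ((S / t) ^ (n * m) * J) ≤ S * ((S / t) ^ (n * m) * J) := by
    gcongr; linarith
  linarith

lemma ac_young {m n k α y : ℝ} (hm0 : 0 < m) (hm1 : m < 1) (hn : n * (1 - m) = 1) (hk : 0 < k)
    (hα : 0 < α) (hy : 0 ≤ y) : k * y ^ m ≤ α * y + k ^ n * α ^ (-(n * m)) := by
  have hn0 : 0 < n := by by_contra h; nlinarith
  by_cases h : k * y ^ m ≤ α * y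
  · have : 0 ≤ k ^ n * α ^ (-(n * m)) := by positivity
    linarith
  · push Not at h
    have hy0 : 0 < y := by
      rcases hy.eq_or_lt with h' | h'
      · rw [← h', Real.zero_rpow hm0.ne'] at h; simp at h
      · exact h'
    have h1 : y ^ (1 - m) ≤ k / α := by
      rw [Real.rpow_sub hy0, Real.rpow_one, div_le_div_iff₀ (by positivity) hα]
      linarith
    have h2 : y ≤ (k / α) ^ n := by
      have := Real.rpow_le_rpow (by positivity) h1 hn0.le
      rwa [← Real.rpow_mul hy, mul_comm (1 - m), hn, Real.rpow_one] at this
    have h3 : k * y ^ m ≤ k ^ n * α ^ (-(n * m)) := by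
      calc k * y ^ m ≤ k * ((k / α) ^ n) ^ m := by gcongr
        _ = k * (k ^ (n * m) / α ^ (n * m)) := by
          rw [← Real.rpow_mul (by positivity), Real.div_rpow hk.le hα.le]
        _ = k ^ n * α ^ (-(n * m)) := by
          rw [Real.rpow_neg hα.le, show n = n * m + 1 by linarith, Real.rpow_add_one hk.ne']
          rw [← show n = n * m + 1 by linarith]
          field_simp
    have : 0 ≤ α * y := by positivity
    linarith

lemma ac_hp {d : ℕ} {m n b R t k α : ℝ} (hm0 : 0 < m) (hm1 : m < 1) (hn : n * (1 - m) = 1)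
    (hb : 0 < b) (hR : 0 < R) (hk : 0 < k) (hα : 0 < α)
    {x₀ : EuclideanSpace ℝ (Fin d)} {φ L : EuclideanSpace ℝ (Fin d) → ℝ}
    (G : ℝ → EuclideanSpace ℝ (Fin d) → ℝ)
    (hG : Continuous (fun p : ℝ × EuclideanSpace ℝ (Fin d) => G p.1 p.2))
    (hφ : Tst x₀ R φ L)
    (HW : ∀ ε > 0, ∃ h₀ > 0, ∀ θ, θ ≤ t → ∀ δ, 0 < δ → δ < h₀ → b ≤ θ - δ → ∀ h, 0 < h → h < h₀ →
      ∀ x ∈ closedBall x₀ (5 / 2 * R), DD h (fun y => (WW n b G θ y) ^ m) x ≤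
        (WW n b G θ x - WW n b G (θ - δ) x) / δ + ε)
    (hpos : ∀ σ ∈ Icc b t, ∀ x ∈ closedBall x₀ (3 * R), 0 < G σ x)
    (hLφ : ∀ x, - (k * φ x ^ m) ≤ L x) (hbt : b ≤ t) :
    ∫ x, φ x * WW n b G b x ≤ Real.exp (α * (t - b)) * ((∫ x, φ x * WW n b G t x) +
      (t - b) * (k ^ n * α ^ (-(n * m)) * volume.real (closedBall x₀ (5 / 2 * R)))) := by
  have ht : 0 < t := hb.trans_le hbt
  have cW := WW_cont n b G hG
  have cWm : ∀ θ, Continuous fun x => WW n b G θ x ^ m := fun θ =>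
    (cW θ).rpow_const fun _ => Or.inr hm0.le
  have WW0 : ∀ θ, b ≤ θ → θ ≤ t → ∀ x, dist x x₀ ≤ 5 / 2 * R → 0 ≤ WW n b G θ x := by
    intro θ h1 h2 x hx
    obtain ⟨σ, h3, h4, _⟩ := FF_min b G hG θ h1 x
    have : 0 < θ := by linarith
    rw [WW, h4]
    have := (hpos σ ⟨h3.1, h3.2.trans h2⟩ x (by rw [mem_closedBall]; linarith)).le
    positivity
  have IW : ∀ θ, Integrable fun x => φ x * WW n b G θ x := fun θ =>
    tst_int (x₀ := x₀) (R := 5 / 2 * R)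
      (hφ.cont.mul (cW θ)) fun x hx => by rw [hφ.supp x hx, zero_mul]
  have IL : ∀ θ, Integrable fun x => WW n b G θ x ^ m * L x := fun θ =>
    tst_int (x₀ := x₀) (R := 5 / 2 * R)
      ((cWm θ).mul hφ.contL) fun x hx => by rw [hφ.suppL x hx, mul_zero]
  set M := k ^ n * α ^ (-(n * m)) with hM
  have hM0 : 0 ≤ M := by positivity
  set V := volume.real (closedBall x₀ (5 / 2 * R)) with hV
  have IV : Integrable ((closedBall x₀ (5 / 2 * R)).indicator fun _ => M) := by
    rw [integrable_indicator_iff measurableSet_closedBall]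
    exact continuousOn_const.integrableOn_compact (isCompact_closedBall _ _)
  have bound : ∀ θ, b ≤ θ → θ ≤ t →
      - (∫ x, WW n b G θ x ^ m * L x) ≤ α * (∫ x, φ x * WW n b G θ x) + M * V := by
    intro θ h1 h2
    have : ∫ x, (closedBall x₀ (5 / 2 * R)).indicator (fun _ => M) x = M * V := by
      rw [integral_indicator measurableSet_closedBall, setIntegral_const, smul_eq_mul, mul_comm]
    rw [← this, ← integral_neg, ← integral_const_mul, ← integral_add ((IW θ).const_mul _) IV]
    apply integral_mono (IL θ).neg (((IW θ).const_mul _).add IV)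
    intro x
    simp only [Pi.neg_apply, Pi.add_apply]
    by_cases hx : dist x x₀ ≤ 5 / 2 * R
    · rw [indicator_of_mem (by simpa using hx)]
      have hw := WW0 θ h1 h2 x hx
      have y := ac_young hm0 hm1 hn hk hα (mul_nonneg hw (hφ.nonneg x))
      have := mul_le_mul_of_nonneg_left (hLφ x) (Real.rpow_nonneg hw m)
      rw [Real.mul_rpow hw (hφ.nonneg x)] at y
      linarith
    · rw [indicator_of_notMem (by simpa using hx)]
      simp [hφ.supp x (not_le.1 hx), hφ.suppL x (not_le.1 hx)]
  have hZS : 0 ≤ ∫ x, φ x * WW n b G t x := by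
    apply integral_nonneg
    intro x
    by_cases hx : dist x x₀ ≤ 5 / 2 * R
    · exact mul_nonneg (hφ.nonneg x) (WW0 t hbt le_rfl x hx)
    · simp [hφ.supp x (not_le.1 hx)]
  exact ac_tele (fun θ => ∫ x, φ x * WW n b G θ x) b t (M * V) α hbt
    (by positivity) hα.le hZS (by
      intro ε hε
      obtain ⟨δ₀, hδ₀, H⟩ := ac_step hm0 hR G hG hφ HW ε hε
      refine ⟨δ₀, hδ₀, fun δ hδ hδ' θ h1 h2 => ?_⟩
      have h3 := H δ hδ hδ' θ (by linarith) h2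
      have h4 := bound θ (by linarith) h2
      have : δ * (- (∫ x, WW n b G θ x ^ m * L x) + ε) ≤
          δ * (α * (∫ x, φ x * WW n b G θ x) + M * V + ε) := by
        gcongr
      linarith)

lemma fderiv_slice {d : ℕ} (f : ℝ × EuclideanSpace ℝ (Fin d) → ℝ) (σ : ℝ)
    (x v : EuclideanSpace ℝ (Fin d)) (hf : DifferentiableAt ℝ f (σ, x)) :
    fderiv ℝ (fun y => f (σ, y)) x v = fderiv ℝ f (σ, x) (0, v) := by
  have h := hf.hasFDerivAt.comp x (hasFDerivAt_prodMk_right (𝕜 := ℝ) σ x)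
  have h' : HasFDerivAt (fun y => f (σ, y)) _ x := h
  rw [h'.fderiv]
  simp

lemma deriv_line {d : ℕ} (f : ℝ × EuclideanSpace ℝ (Fin d) → ℝ) (σ : ℝ)
    (x v : EuclideanSpace ℝ (Fin d)) (hf : DifferentiableAt ℝ f (σ, x)) :
    HasDerivAt (fun r : ℝ => f (σ, x + r • v)) (fderiv ℝ f (σ, x) (0, v)) 0 := by
  have h1 : HasDerivAt (fun r : ℝ => (σ, x + r • v)) ((0 : ℝ), v) 0 := by
    refine (hasDerivAt_const 0 σ).prodMk ?_
    simpa using ((hasDerivAt_id (0 : ℝ)).smul_const v).const_add x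
  have hf' : HasFDerivAt f (fderiv ℝ f (σ, x)) (σ, x + (0 : ℝ) • v) := by
    simpa using hf.hasFDerivAt
  exact hf'.comp_hasDerivAt (0 : ℝ) h1

lemma deriv_time {d : ℕ} (f : ℝ × EuclideanSpace ℝ (Fin d) → ℝ) (σ : ℝ)
    (x : EuclideanSpace ℝ (Fin d)) (hf : DifferentiableAt ℝ f (σ, x)) :
    HasDerivAt (fun r : ℝ => f (r, x)) (fderiv ℝ f (σ, x) (1, 0)) σ := by
  have h1 : HasDerivAt (fun r : ℝ => (r, x)) ((1 : ℝ), (0 : EuclideanSpace ℝ (Fin d))) σ :=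
    (hasDerivAt_id σ).prodMk (hasDerivAt_const σ x)
  exact hf.hasFDerivAt.comp_hasDerivAt σ h1

set_option maxHeartbeats 2000000 in
lemma ac_reg {d : ℕ} {m T a S R : ℝ} {Ω : Set (EuclideanSpace ℝ (Fin d))} (hΩ : IsOpen Ω)
    {u : ℝ → EuclideanSpace ℝ (Fin d) → ℝ} (hsol : IsFDESol m (Ioo 0 T ×ˢ Ω) u)
    {x₀ : EuclideanSpace ℝ (Fin d)} (hR : 0 < R) (hK : closedBall x₀ (3 * R) ⊆ Ω)
    (ha : 0 < a) (haS : a ≤ S) (hST : S < T) :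
    (∀ ε > 0, ∃ h₀ > 0, ∀ σ ∈ Icc a S, ∀ τ, 0 < τ → τ < h₀ → a ≤ σ - τ → ∀ h, 0 < h → h < h₀ →
      ∀ x ∈ closedBall x₀ (5 / 2 * R), DD h (fun y => u σ y ^ m) x ≤
        (u σ x - u (σ - τ) x) / τ + ε) ∧
    (∃ L > 0, ∀ x ∈ closedBall x₀ (3 * R), ∀ s s', a ≤ s → s ≤ s' → s' ≤ S →
      u s' x - u s x ≤ L * (s' - s)) ∧
    (∃ c > 0, ∀ s ∈ Icc a S, ∀ x ∈ closedBall x₀ (3 * R), c ≤ u s x) := by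
  obtain ⟨hpos, hsm, heq⟩ := hsol
  set Q := Ioo 0 T ×ˢ Ω with hQ
  have hQo : IsOpen Q := isOpen_Ioo.prod hΩ
  set U : ℝ × EuclideanSpace ℝ (Fin d) → ℝ := fun p => u p.1 p.2 with hU
  set V : ℝ × EuclideanSpace ℝ (Fin d) → ℝ := fun p => u p.1 p.2 ^ m with hV
  have hVs : ContDiffOn ℝ (⊤ : ℕ∞) V Q := hsm.rpow_const_of_ne fun p hp => (hpos p hp).ne'
  set P : Fin d → ℝ × EuclideanSpace ℝ (Fin d) → ℝ := fun i p => fderiv ℝ V p (0, ee i) with hP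
  have hPs : ∀ i, ContDiffOn ℝ (⊤ : ℕ∞) (P i) Q := fun i =>
    (hVs.fderiv_of_isOpen hQo (by simp)).clm_apply contDiffOn_const
  set Z : Fin d → ℝ × EuclideanSpace ℝ (Fin d) → ℝ := fun i p => fderiv ℝ (P i) p (0, ee i) with hZ
  have hZc : ∀ i, ContinuousOn (Z i) Q := fun i =>
    ((hPs i).continuousOn_fderiv_of_isOpen hQo (by simp)).clm_apply continuousOn_const
  set D : ℝ × EuclideanSpace ℝ (Fin d) → ℝ := fun p => fderiv ℝ U p (1, 0) with hD
  have hDc : ContinuousOn D Q :=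
    (hsm.continuousOn_fderiv_of_isOpen hQo (by simp)).clm_apply continuousOn_const
  have dV : ∀ p ∈ Q, DifferentiableAt ℝ V p := fun p hp =>
    (hVs.contDiffAt (hQo.mem_nhds hp)).differentiableAt (by simp)
  have dP : ∀ i, ∀ p ∈ Q, DifferentiableAt ℝ (P i) p := fun i p hp =>
    ((hPs i).contDiffAt (hQo.mem_nhds hp)).differentiableAt (by simp)
  have dU : ∀ p ∈ Q, DifferentiableAt ℝ U p := fun p hp =>
    (hsm.contDiffAt (hQo.mem_nhds hp)).differentiableAt (by simp)
  have hC : IsCompact (Icc a S ×ˢ closedBall x₀ (3 * R)) :=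
    isCompact_Icc.prod (isCompact_closedBall _ _)
  have hCQ : Icc a S ×ˢ closedBall x₀ (3 * R) ⊆ Q := fun p hp =>
    ⟨⟨ha.trans_le hp.1.1, hp.1.2.trans_lt hST⟩, hK hp.2⟩
  have pde : ∀ p ∈ Q, D p = ∑ i, Z i p := by
    rintro ⟨σ, x⟩ hp
    have h1 := heq (σ, x) hp
    simp only at h1
    have h2 : deriv (fun s => u s x) σ = D (σ, x) := (deriv_time U σ x (dU _ hp)).deriv
    rw [← h2, h1, spaceLap]
    apply Finset.sum_congr rfl
    intro i _
    have h3 : (fun y => fderiv ℝ (fun y => u σ y ^ m) y (EuclideanSpace.single i 1)) =ᶠ[nhds x]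
        fun y => P i (σ, y) := by
      filter_upwards [hΩ.mem_nhds hp.2] with y hy
      exact fderiv_slice V σ y (ee i) (dV _ ⟨hp.1, hy⟩)
    rw [h3.fderiv_eq]
    exact fderiv_slice (P i) σ x (ee i) (dP i _ hp)
  refine ⟨?_, ?_, ?_⟩
  · intro ε hε
    have : ∀ i, ∃ h₀ > 0, ∀ p ∈ Icc a S ×ˢ closedBall x₀ (3 * R),
        ∀ q ∈ Icc a S ×ˢ closedBall x₀ (3 * R), dist p q < h₀ →
          |Z i p - Z i q| ≤ ε / 2 / (d + 1) := by
      intro i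
      have uc := hC.uniformContinuousOn_of_continuous ((hZc i).mono hCQ)
      obtain ⟨δ, h1, h2⟩ := Metric.uniformContinuousOn_iff.1 uc (ε / 2 / (d + 1)) (by positivity)
      exact ⟨δ, h1, fun x hx y hy h => (h2 x hx y hy h).le⟩
    choose η hη0 hη using this
    obtain ⟨h₀, hh₀, hh⟩ : ∃ h₀ > 0, ∀ i, h₀ ≤ η i := by
      rcases isEmpty_or_nonempty (Fin d) with h | h
      · exact ⟨1, one_pos, fun i => h.elim i⟩
      · obtain ⟨j, hj⟩ := Finite.exists_min η
        exact ⟨η j, hη0 j, hj⟩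
    obtain ⟨h₁, hh₁, hD1⟩ := Metric.uniformContinuousOn_iff.1
      (hC.uniformContinuousOn_of_continuous (hDc.mono hCQ)) (ε / 2) (by positivity)
    refine ⟨min (min h₀ h₁) (R / 2), by positivity, ?_⟩
    intro σ hσ τ hτ hτ' haτ h hpos' hlt x hx
    simp only [lt_min_iff] at hτ' hlt
    rw [mem_closedBall] at hx
    have hxK : x ∈ closedBall x₀ (3 * R) := by rw [mem_closedBall]; linarith
    have mem : ∀ i, ∀ s ∈ Icc (-h) h,
        (σ, x + s • ee i) ∈ Icc a S ×ˢ closedBall x₀ (3 * R) ∧ dist (x + s • ee i) x ≤ h := by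
      intro i s hs
      have : dist (x + s • ee i) x ≤ h := by
        rw [dist_eq_norm]
        simp only [add_sub_cancel_left, norm_smul, ee_norm, mul_one, Real.norm_eq_abs]
        exact abs_le.2 hs
      refine ⟨⟨hσ, ?_⟩, this⟩
      simp only [mem_closedBall]
      have := dist_triangle (x + s • ee i) x x₀
      linarith [hlt.2]
    have up := DD_le (fun y => V (σ, y)) (fun i y => P i (σ, y)) (fun i y => Z i (σ, y)) x h hpos'
      (fun i => Z i (σ, x) + ε / 2 / (d + 1))
      (fun i s hs => deriv_line V σ _ _ (dV _ (hCQ (mem i s hs).1)))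
      (fun i s hs => deriv_line (P i) σ _ _ (dP i _ (hCQ (mem i s hs).1)))
      (fun i s hs => by
        have := hη i _ (mem i s hs).1 (σ, x) ⟨hσ, hxK⟩ (by
          rw [Prod.dist_eq]
          simp only [dist_self]
          refine max_lt (hη0 i) ((mem i s hs).2.trans_lt (hlt.1.1.trans_le (hh i))))
        linarith [(abs_le.1 this).2])
    have hp0 := pde (σ, x) (hCQ ⟨hσ, hxK⟩)
    rw [Finset.sum_add_distrib, ← hp0] at up
    have hsum : ∑ i : Fin d, ε / 2 / ((d : ℝ) + 1) ≤ ε / 2 := by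
      simp only [Finset.sum_const, Finset.card_univ, Fintype.card_fin, nsmul_eq_mul]
      rw [mul_div_assoc', div_le_iff₀ (by positivity)]
      nlinarith
    have memt : ∀ s ∈ Icc (σ - τ) σ, (s, x) ∈ Icc a S ×ˢ closedBall x₀ (3 * R) := fun s hs =>
      ⟨⟨haτ.trans hs.1, hs.2.trans hσ.2⟩, hxK⟩
    obtain ⟨ξ, hξ, hξ'⟩ := exists_hasDerivAt_eq_slope (fun s => U (s, x)) (fun s => D (s, x))
      (show σ - τ < σ by linarith)
      (fun s hs => (deriv_time U s x (dU _ (hCQ (memt s hs)))).continuousAt.continuousWithinAt)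
      (fun s hs => deriv_time U s x (dU _ (hCQ (memt s (Ioo_subset_Icc_self hs)))))
    have h5 := hD1 (ξ, x) (memt ξ (Ioo_subset_Icc_self hξ)) (σ, x) ⟨hσ, hxK⟩ (by
      rw [Prod.dist_eq]
      simp only [dist_self]
      refine max_lt ?_ hh₁
      rw [Real.dist_eq, abs_lt]
      constructor <;> linarith [hξ.1, hξ.2, hτ'.1.2])
    rw [Real.dist_eq] at h5
    have h6 := (abs_lt.1 h5).1
    rw [hξ'] at h6
    have e1 : σ - (σ - τ) = τ := by ring
    rw [e1] at h6
    change DD h (fun y => V (σ, y)) x ≤ (U (σ, x) - U (σ - τ, x)) / τ + ε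
    linarith
  · obtain ⟨C, hCb⟩ := hC.exists_bound_of_continuousOn (hDc.mono hCQ)
    refine ⟨|C| + 1, by positivity, ?_⟩
    intro x hx s s' h1 h2 h3
    have memt : ∀ r ∈ Icc s s', (r, x) ∈ Icc a S ×ˢ closedBall x₀ (3 * R) := fun r hr =>
      ⟨⟨h1.trans hr.1, hr.2.trans h3⟩, hx⟩
    apply (convex_Icc s s').image_sub_le_mul_sub_of_deriv_le (f := fun r => U (r, x))
      (fun r hr => (deriv_time U r x (dU _ (hCQ (memt r hr)))).continuousAt.continuousWithinAt)
      (fun r hr => (deriv_time U r x (dU _ (hCQ (memt r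
        (interior_subset hr))))).differentiableAt.differentiableWithinAt) _ s ⟨le_rfl, h2⟩
      s' ⟨h2, le_rfl⟩ h2
    intro r hr
    have hr := interior_subset hr
    rw [(deriv_time U r x (dU _ (hCQ (memt r hr)))).deriv]
    have := hCb _ (memt r hr)
    have h4 := (abs_le.1 this).2
    have := le_abs_self C
    linarith
  · obtain ⟨p, hp, hmin⟩ := hC.exists_isMinOn ⟨(a, x₀), ⟨le_rfl, haS⟩, by simp; positivity⟩
      (hsm.continuousOn.mono hCQ)
    exact ⟨u p.1 p.2, hpos p (hCQ hp), fun s hs x hx => hmin (show (s, x) ∈ _ from ⟨hs, hx⟩)⟩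

lemma posPow_deriv (k : ℕ) (s : ℝ) :
    HasDerivAt (fun s : ℝ => (max s 0) ^ (k + 2)) ((k + 2) * (max s 0) ^ (k + 1)) s := by
  have ne : ∀ y : ℝ, y ≠ 0 →
      HasDerivAt (fun s : ℝ => (max s 0) ^ (k + 2)) ((k + 2) * (max y 0) ^ (k + 1)) y := by
    intro y hy
    rcases lt_or_gt_of_ne hy with h | h
    · rw [max_eq_right h.le, zero_pow (by omega), mul_zero]
      refine (hasDerivAt_const y (0 : ℝ)).congr_of_eventuallyEq ?_
      filter_upwards [Iio_mem_nhds h] with z hz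
      rw [max_eq_right (le_of_lt hz), zero_pow (by omega)]
    · rw [max_eq_left h.le]
      have := hasDerivAt_pow (k + 2) y
      refine (this.congr_deriv (by push_cast; rfl)).congr_of_eventuallyEq ?_
      filter_upwards [Ioi_mem_nhds h] with z hz
      rw [max_eq_left (le_of_lt hz)]
  rcases eq_or_ne s 0 with rfl | h
  · exact hasDerivAt_of_hasDerivAt_of_ne
      (g := fun s : ℝ => ((k : ℝ) + 2) * (max s 0) ^ (k + 1)) ne
      (by fun_prop) (by fun_prop)
  · exact ne s h

lemma posPow_deriv' (k : ℕ) (c s : ℝ) :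
    HasDerivAt (fun s : ℝ => (max (1 - s / c) 0) ^ (k + 2))
      ((k + 2) * (max (1 - s / c) 0) ^ (k + 1) * (-(1 / c))) s := by
  have h1 : HasDerivAt (fun s : ℝ => 1 - s / c) (-(1 / c)) s := by
    simpa using ((hasDerivAt_id s).div_const c).const_sub 1
  exact (posPow_deriv k (1 - s / c)).comp s h1

lemma hp_test (d : ℕ) (m : ℝ) (hm0 : 0 < m) (hm1 : m < 1) :
    ∃ p : ℕ, 0 < p ∧ ∀ (x₀ : EuclideanSpace ℝ (Fin d)) (R : ℝ), 0 < R → ∃ φ L,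
      Tst x₀ R φ L ∧ (∀ x, -(d * p / (2 * R ^ 2) * φ x ^ m) ≤ L x) ∧ (∀ x, φ x ≤ 1) ∧
      (∀ x, 2 * R < dist x x₀ → φ x = 0) ∧ ∀ x ∈ ball x₀ R, (3 / 4 : ℝ) ^ p ≤ φ x := by
  obtain ⟨k, hk⟩ := exists_nat_gt (1 / (1 - m))
  have hkm : ((k : ℝ) + 3) * m ≤ k + 2 := by
    rw [div_lt_iff₀ (by linarith)] at hk
    nlinarith
  refine ⟨k + 3, by omega, ?_⟩
  intro x₀ R hR
  set q : ℝ → ℝ := fun s => max (1 - s / (4 * R ^ 2)) 0 with hq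
  have q0 : ∀ s, 0 ≤ q s := fun s => le_max_right _ _
  have q1 : ∀ s, 0 ≤ s → q s ≤ 1 := fun s hs => max_le (by
    have : 0 ≤ s / (4 * R ^ 2) := by positivity
    linarith) zero_le_one
  have qz : ∀ s, 4 * R ^ 2 ≤ s → q s = 0 := fun s hs => max_eq_right (by
    have : 1 ≤ s / (4 * R ^ 2) := by rw [le_div_iff₀ (by positivity)]; linarith
    linarith)
  have T := radial_test x₀ R hR (fun s => q s ^ (k + 3))
    (fun s => (k + 3) * (-(1 / (4 * R ^ 2))) * q s ^ (k + 2))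
    (fun s => (k + 3) * (-(1 / (4 * R ^ 2))) * ((k + 2) * q s ^ (k + 1) * (-(1 / (4 * R ^ 2)))))
    (fun s _ => (posPow_deriv' (k + 1) (4 * R ^ 2) s).congr_deriv (by push_cast; simp only [hq]; ring))
    (fun s _ => (posPow_deriv' k (4 * R ^ 2) s).const_mul _)
    (by fun_prop) (fun s _ => pow_nonneg (q0 s) _)
    (fun s hs => by
      have : q s = 0 := qz s (by nlinarith [sq_nonneg R])
      simp [this])
  refine ⟨_, _, T, ?_, ?_, ?_, ?_⟩
  · intro x
    set s := ‖x - x₀‖ ^ 2 with hs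
    have hs0 : 0 ≤ s := by positivity
    have e1 : (q s ^ (k + 3)) ^ m = q s ^ (((k : ℝ) + 3) * m) := by
      rw [← Real.rpow_natCast, ← Real.rpow_mul (q0 s)]; push_cast; rfl
    have e2 : q s ^ (k + 2) ≤ (q s ^ (k + 3)) ^ m := by
      rw [e1]
      rcases (q0 s).eq_or_lt with h | h
      · rw [← h, zero_pow (by omega)]; positivity
      · rw [← Real.rpow_natCast]
        exact Real.rpow_le_rpow_of_exponent_ge h (q1 s hs0) (by push_cast; linarith)
    have e3 : 0 ≤ 4 * s * (((k : ℝ) + 3) * (-(1 / (4 * R ^ 2))) *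
        ((k + 2) * q s ^ (k + 1) * (-(1 / (4 * R ^ 2))))) := by
      have : 4 * s * (((k : ℝ) + 3) * (-(1 / (4 * R ^ 2))) *
        ((k + 2) * q s ^ (k + 1) * (-(1 / (4 * R ^ 2))))) = 4 * s * (((k : ℝ) + 3) * ((1 / (4 * R ^ 2))) *
        ((k + 2) * q s ^ (k + 1) * ((1 / (4 * R ^ 2))))) := by ring
      rw [this]
      have := q0 s
      positivity
    have e4 : (d : ℝ) * (k + 3) / (2 * R ^ 2) * q s ^ (k + 2) ≤
        (d : ℝ) * (k + 3) / (2 * R ^ 2) * (q s ^ (k + 3)) ^ m := by gcongr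
    have e5 : 2 * d * (((k : ℝ) + 3) * (-(1 / (4 * R ^ 2))) * q s ^ (k + 2)) =
        - ((d : ℝ) * (k + 3) / (2 * R ^ 2) * q s ^ (k + 2)) := by
      field_simp
      ring
    push_cast
    linarith
  · intro x
    exact pow_le_one₀ (q0 _) (q1 _ (by positivity))
  · intro x hx
    rw [dist_eq_norm] at hx
    simp only [qz _ (show 4 * R ^ 2 ≤ ‖x - x₀‖ ^ 2 by nlinarith)]
    simp
  · intro x hx
    rw [mem_ball, dist_eq_norm] at hx
    have : ‖x - x₀‖ ^ 2 ≤ R ^ 2 := by gcongr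
    refine pow_le_pow_left₀ (by norm_num) (le_max_of_le_left ?_) _
    have : ‖x - x₀‖ ^ 2 / (4 * R ^ 2) ≤ 1 / 4 := by
      rw [div_le_iff₀ (by positivity)]; linarith
    linarith

lemma green_test {d : ℕ} (x₀ : EuclideanSpace ℝ (Fin d)) {R ρ : ℝ} (hR : 0 < R) (hρ : 0 < ρ)
    (hρR : ρ ≤ R) : ∃ φ L, Tst x₀ R φ L ∧
      (∀ x, dist x x₀ ≤ 2 * R → R ^ 2 / 72 * (6 * R ^ 2) ^ (-(d : ℝ) / 2) ≤ φ x) ∧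
      ∀ x, -(d * ρ ^ 2 * (‖x - x₀‖ ^ 2 + ρ ^ 2) ^ (-(d : ℝ) / 2 - 1) *
        (max (1 - ‖x - x₀‖ ^ 2 / (6 * R ^ 2)) 0) ^ 2) ≤ L x := by
  set q : ℝ → ℝ := fun s => max (1 - s / (6 * R ^ 2)) 0 with hq
  set f : ℝ → ℝ := fun s => 1 / 2 * (s + ρ ^ 2) ^ (-(d : ℝ) / 2) * q s ^ 2 with hf
  have hρ2 : 0 < ρ ^ 2 := by positivity
  have q0 : ∀ s, 0 ≤ q s := fun s => le_max_right _ _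
  have qz : ∀ s, 6 * R ^ 2 ≤ s → q s = 0 := fun s hs => max_eq_right (by
    have : 1 ≤ s / (6 * R ^ 2) := by rw [le_div_iff₀ (by positivity)]; linarith
    linarith)
  have fc : ContinuousOn f (Ioi (-ρ ^ 2)) := by
    apply ContinuousOn.mul _ (by fun_prop)
    apply ContinuousOn.mul continuousOn_const
    exact ContinuousOn.rpow_const (by fun_prop) fun s hs => Or.inl (by
      simp only [mem_Ioi] at hs; linarith)
  have fc0 : ContinuousOn f (Ici 0) := fc.mono fun s hs => by
    simp only [mem_Ici, mem_Ioi] at *; linarith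
  have f0 : ∀ s, 0 ≤ s → 0 ≤ f s := fun s hs => by
    have : 0 < s + ρ ^ 2 := by linarith
    positivity
  have fz : ∀ s, 6 * R ^ 2 ≤ s → f s = 0 := fun s hs => by simp [hf, qz s hs]
  have fi : ∀ s t, 0 ≤ s → 0 ≤ t → IntervalIntegrable f volume s t := fun s t hs ht =>
    (fc0.mono fun r hr => (le_inf hs ht).trans hr.1).intervalIntegrable
  have R6 : 0 ≤ 6 * R ^ 2 := by positivity
  set g : ℝ → ℝ := fun s => ∫ σ in s..(6 * R ^ 2), f σ with hg
  have gd : ∀ s, 0 ≤ s → HasDerivAt g (-f s) s := fun s hs =>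
    intervalIntegral.integral_hasDerivAt_left (fi s _ hs R6)
      (fc.stronglyMeasurableAtFilter isOpen_Ioi s (by simp only [mem_Ioi]; linarith))
      (fc.continuousAt (Ioi_mem_nhds (by linarith)))
  set g2 : ℝ → ℝ := fun s => d / 4 * (s + ρ ^ 2) ^ (-(d : ℝ) / 2 - 1) * q s ^ 2 +
    1 / (6 * R ^ 2) * (s + ρ ^ 2) ^ (-(d : ℝ) / 2) * q s with hg2
  have fd : ∀ s, 0 ≤ s → HasDerivAt (fun s => - f s) (g2 s) s := by
    intro s hs
    have h1 : HasDerivAt (fun s : ℝ => (s + ρ ^ 2) ^ (-(d : ℝ) / 2))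
        (1 * (-(d : ℝ) / 2) * (s + ρ ^ 2) ^ (-(d : ℝ) / 2 - 1)) s :=
      ((hasDerivAt_id s).add_const (ρ ^ 2)).rpow_const (Or.inl (by simp only [id]; linarith))
    have h2 := posPow_deriv' 0 (6 * R ^ 2) s
    refine ((h1.const_mul (1 / 2)).mul h2).neg.congr_deriv ?_
    simp only [hg2, hq]
    push_cast
    ring
  have T := radial_test x₀ R hR g (fun s => - f s) g2 gd fd
    (by
      apply ContinuousOn.add
      · apply ContinuousOn.mul _ (by fun_prop)
        apply ContinuousOn.mul continuousOn_const
        exact ContinuousOn.rpow_const (by fun_prop) fun s hs => Or.inl (by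
          simp only [mem_Ici] at hs; linarith)
      · apply ContinuousOn.mul _ (by fun_prop)
        apply ContinuousOn.mul continuousOn_const
        exact ContinuousOn.rpow_const (by fun_prop) fun s hs => Or.inl (by
          simp only [mem_Ici] at hs; linarith))
    (by
      intro s hs
      rcases le_total s (6 * R ^ 2) with h | h
      · exact intervalIntegral.integral_nonneg h fun r hr => f0 r (hs.trans hr.1)
      · have : g s = ∫ σ in s..(6 * R ^ 2), (0 : ℝ) := by
          apply intervalIntegral.integral_congr
          intro r hr
          rw [uIcc_of_ge h] at hr
          exact fz r hr.1
        rw [this]; simp)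
    (by
      intro s hs
      refine ⟨?_, by simp [fz s hs], by simp [hg2, qz s hs]⟩
      have : g s = ∫ σ in s..(6 * R ^ 2), (0 : ℝ) := by
          apply intervalIntegral.integral_congr
          intro r hr
          rw [uIcc_of_ge hs] at hr
          exact fz r hr.1
      rw [this]; simp)
  refine ⟨_, _, T, ?_, ?_⟩
  · intro x hx
    set s := ‖x - x₀‖ ^ 2 with hs
    rw [dist_eq_norm] at hx
    have hs0 : 0 ≤ s := by positivity
    have hs4 : s ≤ 4 * R ^ 2 := by nlinarith [norm_nonneg (x - x₀)]
    have R2 : 0 < R ^ 2 := by positivity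
    have h1 : ∫ σ in (4 * R ^ 2)..(5 * R ^ 2), f σ ≤ g s := by
      apply intervalIntegral.integral_mono_interval hs4 (by linarith) (by linarith) _ (fi _ _ hs0 R6)
      filter_upwards [ae_restrict_mem measurableSet_Ioc] with r hr
      exact f0 r (hs0.trans hr.1.le)
    have h2 : ∫ σ in (4 * R ^ 2)..(5 * R ^ 2), (1 / 72 * (6 * R ^ 2) ^ (-(d : ℝ) / 2)) ≤
        ∫ σ in (4 * R ^ 2)..(5 * R ^ 2), f σ := by
      apply intervalIntegral.integral_mono_on (by linarith) (by simp)
        (fi _ _ (by positivity) (by positivity))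
      intro r hr
      have e1 : (6 * R ^ 2) ^ (-(d : ℝ) / 2) ≤ (r + ρ ^ 2) ^ (-(d : ℝ) / 2) := by
        apply Real.rpow_le_rpow_of_nonpos (by linarith [hr.1]) (by nlinarith [hr.2])
        have : (0 : ℝ) ≤ d := by positivity
        linarith
      have e2 : 1 / 6 ≤ q r := le_max_of_le_left (by
        have : r / (6 * R ^ 2) ≤ 5 / 6 := by
          rw [div_le_iff₀ (by positivity)]; linarith [hr.2]
        linarith)
      have e3 : 1 / 36 ≤ q r ^ 2 := by nlinarith
      have e4 : 0 ≤ (6 * R ^ 2) ^ (-(d : ℝ) / 2) := by positivity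
      simp only [hf]
      nlinarith [mul_le_mul e1 e3 (by norm_num) (e4.trans e1)]
    rw [intervalIntegral.integral_const, smul_eq_mul] at h2
    refine le_trans (le_of_eq ?_) (h2.trans h1)
    ring
  · intro x
    set s := ‖x - x₀‖ ^ 2 with hs
    have hs0 : 0 ≤ s := by positivity
    have hsp : 0 < s + ρ ^ 2 := by linarith
    have e1 : (s + ρ ^ 2) ^ (-(d : ℝ) / 2) = (s + ρ ^ 2) ^ (-(d : ℝ) / 2 - 1) * (s + ρ ^ 2) := by
      rw [← Real.rpow_add_one hsp.ne']; ring_nf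
    have e2 : 0 ≤ 4 * s * (1 / (6 * R ^ 2) * (s + ρ ^ 2) ^ (-(d : ℝ) / 2) * q s) := by
      have := q0 s
      positivity
    simp only [hf, hg2]
    rw [e1] at e2 ⊢
    nlinarith

lemma ext_cont {d : ℕ} {x₀ : EuclideanSpace ℝ (Fin d)} {R : ℝ} (hR : 0 < R)
    {Ω : Set (EuclideanSpace ℝ (Fin d))} (hΩ : IsOpen Ω) (hK : closedBall x₀ (3 * R) ⊆ Ω)
    {φ f : EuclideanSpace ℝ (Fin d) → ℝ} (hφ : Continuous φ)
    (hs : ∀ x, 5 / 2 * R < dist x x₀ → φ x = 0) (hf : ContinuousOn f Ω) :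
    Continuous fun x => φ x * f x := by
  rw [continuous_iff_continuousAt]
  intro x
  by_cases hx : x ∈ Ω
  · exact hφ.continuousAt.mul (hf.continuousAt (hΩ.mem_nhds hx))
  · have h3 : 5 / 2 * R < dist x x₀ := by
      by_contra h
      exact hx (hK (by rw [mem_closedBall]; linarith))
    have ev : ∀ᶠ y in nhds x, φ y * f y = 0 := by
      have : IsOpen {y | 5 / 2 * R < dist y x₀} := isOpen_lt continuous_const (by fun_prop)
      filter_upwards [this.mem_nhds h3] with y hy
      rw [hs y hy, zero_mul]
    exact (continuousAt_const (y := (0 : ℝ))).congr (ev.mono fun y hy => hy.symm)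

lemma ac_anti {n c L b σ σ' v v' : ℝ} (hn : 1 ≤ n) (hL : 0 < L) (hb : 0 < b)
    (hbc : 2 * b * L ≤ c) (hσ : b ≤ σ) (hσσ : σ ≤ σ') (hσ' : σ' ≤ 2 * b) (hv : c ≤ v)
    (hvv : v' - v ≤ L * (σ' - σ)) : σ' ^ (-n) * v' ≤ σ ^ (-n) * v := by
  have s0 : 0 < σ := hb.trans_le hσ
  have s0' : 0 < σ' := s0.trans_le hσσ
  have hc : 0 < c := lt_of_lt_of_le (by positivity) hbc
  have hv0 : 0 < v := hc.trans_le hv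
  have h1 : σ' / σ ≤ (σ' / σ) ^ n :=
    Real.self_le_rpow_of_one_le (by rw [le_div_iff₀ s0]; linarith) hn
  have h2 : v' ≤ σ' / σ * v := by
    rw [div_mul_eq_mul_div, le_div_iff₀ s0]
    have : σ * L ≤ v := by nlinarith
    nlinarith [mul_nonneg (sub_nonneg.2 hσσ) (sub_nonneg.2 this)]
  have h3 : v' ≤ (σ' / σ) ^ n * v := h2.trans (by gcongr)
  rw [Real.div_rpow s0'.le s0.le] at h3
  rw [Real.rpow_neg s0'.le, Real.rpow_neg s0.le]
  have p1 : 0 < σ ^ n := by positivity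
  have p2 : 0 < σ' ^ n := by positivity
  calc (σ' ^ n)⁻¹ * v' ≤ (σ' ^ n)⁻¹ * (σ' ^ n / σ ^ n * v) := by gcongr
    _ = (σ ^ n)⁻¹ * v := by field_simp

set_option maxHeartbeats 1000000 in
lemma ac_comb {d : ℕ} {m n T a t S R k C : ℝ} (hm0 : 0 < m) (hm1 : m < 1) (hn : n * (1 - m) = 1)
    {Ω : Set (EuclideanSpace ℝ (Fin d))} (hΩ : IsOpen Ω)
    {u : ℝ → EuclideanSpace ℝ (Fin d) → ℝ} (hsol : IsFDESol m (Ioo 0 T ×ˢ Ω) u)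
    {x₀ : EuclideanSpace ℝ (Fin d)} (hR : 0 < R) (hK : closedBall x₀ (3 * R) ⊆ Ω)
    (ha : 0 < a) (hat : a < t) (htS : t < S) (hST : S < T)
    {φ₀ L₀ φ L ψ : EuclideanSpace ℝ (Fin d) → ℝ} (hφ₀ : Tst x₀ R φ₀ L₀) (hφ : Tst x₀ R φ L)
    (hk : 0 < k) (hLφ : ∀ x, - (k * φ₀ x ^ m) ≤ L₀ x)
    (hψc : Continuous ψ) (hψ0 : ∀ x, 0 ≤ ψ x) (hψs : ∀ x, 5 / 2 * R < dist x x₀ → ψ x = 0)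
    (hLψ : ∀ x, - ψ x ≤ L x) (hC : 0 ≤ C) (hCφ : ∀ x, φ₀ x ≤ C * φ x) :
    ∫ x, φ₀ x * u a x ≤ Real.exp 1 * (C * ((∫ x, φ x * u S x) +
      T ^ n * (t - a) ^ (-(n * m)) * ∫ x, ψ x * u t x ^ m) +
        t ^ n * (k ^ n * volume.real (closedBall x₀ (5 / 2 * R)))) := by
  have hn0 : 0 < n := by
    by_contra h
    nlinarith
  have hn1 : 1 ≤ n := by nlinarith
  have hn' : n * m + 1 = n := by linarith
  have t0 : 0 < t := ha.trans hat
  obtain ⟨H, ⟨Λ, hΛ, HΛ⟩, c, hc, Hc⟩ := ac_reg hΩ hsol hR hK ha (hat.trans htS).le hST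
  obtain ⟨hpos, hsm, -⟩ := hsol
  have uc : ContinuousOn (fun p : ℝ × EuclideanSpace ℝ (Fin d) => u p.1 p.2) (Ioo 0 T ×ˢ Ω) :=
    hsm.continuousOn
  have ucs : ∀ s, 0 < s → s < T → ContinuousOn (u s) Ω := fun s h1 h2 =>
    uc.comp (f := fun x => (s, x)) (by fun_prop) fun x hx => ⟨⟨h1, h2⟩, hx⟩
  set b := min a (c / (2 * Λ)) with hb
  have b0 : 0 < b := by positivity
  have hba : b ≤ a := min_le_left _ _
  have hbc : 2 * b * Λ ≤ c := by
    have : b ≤ c / (2 * Λ) := min_le_right _ _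
    rw [le_div_iff₀ (by positivity)] at this
    linarith
  obtain ⟨e, he⟩ : ∃ e, e = a - b := ⟨_, rfl⟩
  have he0 : 0 ≤ e := by linarith
  obtain ⟨S', hS'⟩ : ∃ S', S' = S - e := ⟨_, rfl⟩
  obtain ⟨t', ht'⟩ : ∃ t', t' = t - e := ⟨_, rfl⟩
  have bt' : b ≤ t' := by linarith
  have tS' : t' ≤ S' := by linarith
  have bS' : b ≤ S' := by linarith
  obtain ⟨G, hG, hGe⟩ : ∃ G : ℝ → EuclideanSpace ℝ (Fin d) → ℝ,
      Continuous (fun p : ℝ × EuclideanSpace ℝ (Fin d) => G p.1 p.2) ∧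
      ∀ σ ∈ Icc b S', ∀ x ∈ closedBall x₀ (3 * R), G σ x = σ ^ (-n) * u (σ + e) x := by
    have hcl : IsClosed (Icc b S' ×ˢ closedBall x₀ (3 * R)) := isClosed_Icc.prod isClosed_closedBall
    have hc0 : ContinuousOn (fun p : ℝ × EuclideanSpace ℝ (Fin d) => p.1 ^ (-n) * u (p.1 + e) p.2)
        (Icc b S' ×ˢ closedBall x₀ (3 * R)) := by
      apply ContinuousOn.mul
      · exact ContinuousOn.rpow_const (by fun_prop) fun p hp => Or.inl (b0.trans_le hp.1.1).ne'
      · exact uc.comp (f := fun p : ℝ × EuclideanSpace ℝ (Fin d) => (p.1 + e, p.2)) (by fun_prop)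
          fun p hp => ⟨⟨by linarith [hp.1.1], by linarith [hp.1.2]⟩, hK hp.2⟩
    obtain ⟨g, hg⟩ := ContinuousMap.exists_restrict_eq hcl
      (⟨_, continuousOn_iff_continuous_domRestrict.1 hc0⟩ : C(_, ℝ))
    refine ⟨fun σ x => g (σ, x), by simpa using g.continuous, fun σ hσ x hx => ?_⟩
    exact congrArg (fun f : C(_, ℝ) => f ⟨(σ, x), ⟨hσ, hx⟩⟩) hg
  have hGu : ∀ σ ∈ Icc b S', ∀ x ∈ closedBall x₀ (3 * R), σ ^ n * G σ x = u (σ + e) x := by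
    intro σ hσ x hx
    have : 0 < σ := b0.trans_le hσ.1
    rw [hGe σ hσ x hx, ← mul_assoc, ← Real.rpow_add this]
    simp
  have hGp : ∀ σ ∈ Icc b S', ∀ x ∈ closedBall x₀ (3 * R), 0 < G σ x := by
    intro σ hσ x hx
    have h1 : 0 < σ := b0.trans_le hσ.1
    have h2 : 0 < u (σ + e) x :=
      hpos (σ + e, x) ⟨⟨by linarith, by linarith [hσ.2]⟩, hK hx⟩
    rw [hGe σ hσ x hx]; positivity
  have hKK : ∀ x ∈ closedBall x₀ (5 / 2 * R), ∀ i, ∀ h, 0 < h → h < R / 2 →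
      x + h • ee i ∈ closedBall x₀ (3 * R) ∧ x - h • ee i ∈ closedBall x₀ (3 * R) := by
    intro x hx i h h0 h1
    simp only [mem_closedBall, dist_eq_norm] at *
    have nh : ‖h • (ee i : EuclideanSpace ℝ (Fin d))‖ = h := by
      rw [norm_smul, ee_norm, mul_one, Real.norm_eq_abs, abs_of_pos h0]
    constructor
    · have := norm_add_le (x - x₀) (h • ee i)
      rw [show x + h • ee i - x₀ = x - x₀ + h • ee i by abel]
      linarith
    · have := norm_sub_le (x - x₀) (h • ee i)
      rw [show x - h • ee i - x₀ = x - x₀ - h • ee i by abel]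
      linarith
  have hsub : closedBall x₀ (5 / 2 * R) ⊆ closedBall x₀ (3 * R) :=
    closedBall_subset_closedBall (by linarith)
  have HW := ac_core hm0 hn' hn0 b0 bS' (closedBall x₀ (3 * R)) (closedBall x₀ (5 / 2 * R))
    G hG hGp (R / 2) (by positivity) hKK hsub
    (by
      intro x hx σ σ' h1 h2 h3 h4
      rw [hGe σ ⟨h1, h2.trans h4⟩ x hx, hGe σ' ⟨h1.trans h2, h4⟩ x hx]
      refine ac_anti hn1 hΛ b0 hbc h1 h2 h3 (Hc _ ⟨by linarith, by linarith⟩ x hx) ?_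
      have := HΛ x hx (σ + e) (σ' + e) (by linarith) (by linarith) (by linarith)
      linarith)
    (by
      intro ε hε
      obtain ⟨h₀, hh₀, H⟩ := H ε hε
      refine ⟨min h₀ (R / 2), by positivity, ?_⟩
      intro σ hσ τ hτ hτ' hbτ h hh hh' x hx
      simp only [lt_min_iff] at hτ' hh'
      have := H (σ + e) ⟨by linarith [hσ.1], by linarith [hσ.2]⟩ τ hτ hτ'.1 (by linarith) h hh hh'.1
        x hx
      have e1 : DD h (fun y => (σ ^ n * G σ y) ^ m) x = DD h (fun y => u (σ + e) y ^ m) x := by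
        unfold DD
        congr 1
        apply Finset.sum_congr rfl
        intro i _
        have hh2 := hKK x hx i h hh hh'.2
        beta_reduce
        rw [hGu σ hσ _ hh2.1, hGu σ hσ _ hh2.2, hGu σ hσ _ (hsub hx)]
      rw [e1, hGu σ hσ _ (hsub hx), hGu (σ - τ) ⟨hbτ, by linarith [hσ.2]⟩ _ (hsub hx)]
      rwa [show σ - τ + e = σ + e - τ by ring])
  have cW := WW_cont n b G hG
  have cWm : ∀ θ, Continuous fun x => WW n b G θ x ^ m := fun θ =>
    (cW θ).rpow_const fun _ => Or.inr hm0.le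
  have W0 : ∀ θ ∈ Icc b S', ∀ x ∈ closedBall x₀ (5 / 2 * R), 0 ≤ WW n b G θ x := by
    intro θ hθ x hx
    obtain ⟨σ, h3, h4, _⟩ := FF_min b G hG θ hθ.1 x
    have : 0 < θ := b0.trans_le hθ.1
    have := (hGp σ ⟨h3.1, h3.2.trans hθ.2⟩ x (hsub hx)).le
    rw [WW, h4]; positivity
  have Wu : ∀ θ ∈ Icc b S', ∀ x ∈ closedBall x₀ (5 / 2 * R), WW n b G θ x ≤ u (θ + e) x := by
    intro θ hθ x hx
    have : 0 < θ := b0.trans_le hθ.1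
    rw [← hGu θ hθ x (hsub hx), WW]
    have := FF_le b G hG θ x θ ⟨hθ.1, le_rfl⟩
    gcongr
  have hp := ac_hp (α := 1 / t) hm0 hm1 hn b0 hR hk (by positivity) G hG hφ₀
    (t := t') (fun ε hε => by
      obtain ⟨h₀, h1, h2⟩ := HW ε hε
      exact ⟨h₀, h1, fun θ hθ => h2 θ (hθ.trans tS')⟩)
    (fun σ hσ => hGp σ ⟨hσ.1, hσ.2.trans tS'⟩) hLφ bt'
  have gr := ac_green hm0 hn' hn0 b0 hR G hG hφ HW hGp hψc hψ0 hψs hLψ bt' tS'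
  have i0 : ∫ x, φ₀ x * WW n b G b x = ∫ x, φ₀ x * u a x := by
    congr 1
    ext x
    by_cases hx : 5 / 2 * R < dist x x₀
    · rw [hφ₀.supp x hx]; simp
    · have hx' : x ∈ closedBall x₀ (3 * R) := hsub (by rw [mem_closedBall]; linarith)
      congr 1
      rw [WW, FF]
      simp only [Icc_self, image_singleton, csInf_singleton]
      rw [hGu b ⟨le_rfl, bS'⟩ x hx', he]
      simp
  have i1 : ∫ x, φ₀ x * WW n b G t' x ≤ C * ∫ x, φ x * WW n b G t' x := by
    rw [← integral_const_mul]
    refine integral_mono (tst_int (R := 5 / 2 * R) (x₀ := x₀) (hφ₀.cont.mul (cW t')) fun x hx => by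
      rw [hφ₀.supp x hx, zero_mul]) ((tst_int (R := 5 / 2 * R) (x₀ := x₀) (hφ.cont.mul (cW t'))
        fun x hx => by simp [hφ.supp x hx]).const_mul C) fun x => ?_
    simp only
    by_cases hx : 5 / 2 * R < dist x x₀
    · rw [hφ₀.supp x hx, hφ.supp x hx]; simp
    · have := W0 t' ⟨bt', tS'⟩ x (by rw [mem_closedBall]; linarith)
      rw [← mul_assoc]
      exact mul_le_mul_of_nonneg_right (hCφ x) this
  have i2 : ∫ x, φ x * WW n b G S' x ≤ ∫ x, φ x * u S x := by
    refine integral_mono (tst_int (R := 5 / 2 * R) (x₀ := x₀) (hφ.cont.mul (cW S')) fun x hx => by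
      rw [hφ.supp x hx, zero_mul]) (tst_int (R := 5 / 2 * R) (x₀ := x₀)
        (ext_cont hR hΩ hK hφ.cont hφ.supp (ucs S (by linarith) hST))
        fun x hx => by rw [hφ.supp x hx, zero_mul]) fun x => ?_
    simp only
    by_cases hx : 5 / 2 * R < dist x x₀
    · rw [hφ.supp x hx]; simp
    · have := Wu S' ⟨bS', le_rfl⟩ x (by rw [mem_closedBall]; linarith)
      rw [hS', sub_add_cancel] at this
      rw [hS']
      exact mul_le_mul_of_nonneg_left this (hφ.nonneg x)
  have ucm : ContinuousOn (fun x => u t x ^ m) Ω :=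
    (ucs t t0 (htS.trans hST)).rpow_const fun _ _ => Or.inr hm0.le
  have i3 : ∫ x, WW n b G t' x ^ m * ψ x ≤ ∫ x, ψ x * u t x ^ m := by
    refine integral_mono (tst_int (R := 5 / 2 * R) (x₀ := x₀) ((cWm t').mul hψc) fun x hx => by
      rw [hψs x hx, mul_zero]) (tst_int (R := 5 / 2 * R) (x₀ := x₀)
        (ext_cont hR hΩ hK hψc hψs ucm)
        fun x hx => by rw [hψs x hx, zero_mul]) fun x => ?_
    simp only
    by_cases hx : 5 / 2 * R < dist x x₀
    · rw [hψs x hx]; simp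
    · have hx' : x ∈ closedBall x₀ (5 / 2 * R) := by rw [mem_closedBall]; linarith
      have h1 := Wu t' ⟨bt', tS'⟩ x hx'
      have h2 := W0 t' ⟨bt', tS'⟩ x hx'
      rw [show t' + e = t by linarith] at h1
      rw [mul_comm]
      exact mul_le_mul_of_nonneg_left (Real.rpow_le_rpow h2 h1 hm0.le) (hψ0 x)
  have i3n : 0 ≤ ∫ x, ψ x * u t x ^ m := by
    apply integral_nonneg
    intro x
    simp only [Pi.zero_apply]
    by_cases hx : 5 / 2 * R < dist x x₀
    · rw [hψs x hx]; simp
    · have hx' : x ∈ closedBall x₀ (3 * R) := by rw [mem_closedBall]; linarith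
      have := hpos (t, x) ⟨⟨t0, htS.trans hST⟩, hK hx'⟩
      simp only at this
      exact mul_nonneg (hψ0 x) (by positivity)
  have t0' : 0 < t' := b0.trans_le bt'
  have S0' : 0 < S' := b0.trans_le bS'
  have hcoef : S' * (S' / t') ^ (n * m) ≤ T ^ n * (t - a) ^ (-(n * m)) := by
    rw [Real.div_rpow S0'.le t0'.le]
    have e1 : S' * (S' ^ (n * m) / t' ^ (n * m)) = S' ^ n * t' ^ (-(n * m)) := by
      rw [Real.rpow_neg t0'.le, div_eq_mul_inv, ← mul_assoc, ← Real.rpow_one_add' S0'.le (by positivity)]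
      congr 2
      linarith
    rw [e1]
    have h1 : S' ^ n ≤ T ^ n := Real.rpow_le_rpow S0'.le (by linarith) hn0.le
    have h2 : t' ^ (-(n * m)) ≤ (t - a) ^ (-(n * m)) :=
      Real.rpow_le_rpow_of_nonpos (by linarith) (by linarith) (by
        have : 0 < n * m := by positivity
        linarith)
    have h3 : 0 ≤ T ^ n := (by positivity : 0 ≤ S' ^ n).trans h1
    gcongr
  have hexp : Real.exp (1 / t * (t' - b)) ≤ Real.exp 1 := by
    apply Real.exp_le_exp.2
    rw [one_div, inv_mul_le_iff₀ t0]
    linarith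
  have hV : 0 ≤ volume.real (closedBall x₀ (5 / 2 * R)) := measureReal_nonneg
  have hlast : (t' - b) * (k ^ n * (1 / t) ^ (-(n * m)) * volume.real (closedBall x₀ (5 / 2 * R))) ≤
      t ^ n * (k ^ n * volume.real (closedBall x₀ (5 / 2 * R))) := by
    have e1 : (1 / t) ^ (-(n * m)) = t ^ (n * m) := by
      rw [one_div, Real.inv_rpow t0.le, ← Real.rpow_neg t0.le, neg_neg]
    have e2 : t ^ n = t * t ^ (n * m) := by
      rw [← Real.rpow_one_add' t0.le (by positivity)]
      congr 1; linarith
    rw [e1, e2]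
    have h1 : t' - b ≤ t := by linarith
    have h2 : 0 ≤ t ^ (n * m) * (k ^ n * volume.real (closedBall x₀ (5 / 2 * R))) := by positivity
    nlinarith [mul_le_mul_of_nonneg_right h1 h2]
  have i00 : 0 ≤ ∫ x, φ₀ x * WW n b G t' x := by
    apply integral_nonneg
    intro x
    simp only [Pi.zero_apply]
    by_cases hx : 5 / 2 * R < dist x x₀
    · rw [hφ₀.supp x hx]; simp
    · have hx' : x ∈ closedBall x₀ (5 / 2 * R) := by rw [mem_closedBall]; linarith
      exact mul_nonneg (hφ₀.nonneg x) (W0 t' ⟨bt', tS'⟩ x hx')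
  have i3' : 0 ≤ ∫ x, WW n b G t' x ^ m * ψ x := by
    apply integral_nonneg
    intro x
    simp only [Pi.zero_apply]
    by_cases hx : 5 / 2 * R < dist x x₀
    · rw [hψs x hx]; simp
    · have hx' : x ∈ closedBall x₀ (5 / 2 * R) := by rw [mem_closedBall]; linarith
      have := W0 t' ⟨bt', tS'⟩ x hx'
      exact mul_nonneg (by positivity) (hψ0 x)
  have hlast0 : 0 ≤ (t' - b) * (k ^ n * (1 / t) ^ (-(n * m)) *
      volume.real (closedBall x₀ (5 / 2 * R))) := by
    have : 0 ≤ t' - b := by linarith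
    positivity
  have j1 : S' * (S' / t') ^ (n * m) * ∫ x, WW n b G t' x ^ m * ψ x ≤
      T ^ n * (t - a) ^ (-(n * m)) * ∫ x, ψ x * u t x ^ m :=
    mul_le_mul hcoef i3 i3' ((by positivity : 0 ≤ S' * (S' / t') ^ (n * m)).trans hcoef)
  rw [i0] at hp
  refine hp.trans (mul_le_mul hexp (add_le_add (i1.trans ?_) hlast) (by positivity) (by positivity))
  exact mul_le_mul_of_nonneg_left (gr.trans (add_le_add i2 j1)) hC

lemma time_cont {d : ℕ} {x₀ : EuclideanSpace ℝ (Fin d)} {R : ℝ} (hR : 0 < R) {I : Set ℝ}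
    {Ω : Set (EuclideanSpace ℝ (Fin d))} (hΩ : IsOpen Ω) (hK : closedBall x₀ (3 * R) ⊆ Ω)
    {φ : EuclideanSpace ℝ (Fin d) → ℝ} {u : ℝ → EuclideanSpace ℝ (Fin d) → ℝ} (hφ : Continuous φ)
    (hs : ∀ x, 5 / 2 * R < dist x x₀ → φ x = 0)
    (hu : ContinuousOn (fun p : ℝ × EuclideanSpace ℝ (Fin d) => u p.1 p.2) (I ×ˢ Ω)) :
    ContinuousOn (fun s => ∫ x, φ x * u s x) I := by
  apply continuousOn_integral_of_compact_support (isCompact_closedBall x₀ (5 / 2 * R))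
  · rintro ⟨s, x⟩ ⟨hsI, -⟩
    by_cases hx : x ∈ Ω
    · have h1 : ContinuousWithinAt (fun p : ℝ × EuclideanSpace ℝ (Fin d) => u p.1 p.2)
          (I ×ˢ univ) (s, x) := by
        refine (hu (s, x) ⟨hsI, hx⟩).mono_of_mem_nhdsWithin ?_
        rw [nhdsWithin_prod_eq]
        exact Filter.prod_mem_prod self_mem_nhdsWithin (nhdsWithin_le_nhds (hΩ.mem_nhds hx))
      have h2 : Continuous fun p : ℝ × EuclideanSpace ℝ (Fin d) => φ p.2 := by fun_prop
      exact h2.continuousAt.continuousWithinAt.mul h1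
    · have h3 : 5 / 2 * R < dist x x₀ := by
        by_contra h
        exact hx (hK (by rw [mem_closedBall]; linarith))
      have ho : IsOpen {p : ℝ × EuclideanSpace ℝ (Fin d) | 5 / 2 * R < dist p.2 x₀} :=
        isOpen_lt continuous_const (by fun_prop)
      have ev : ∀ᶠ p in nhds (s, x), Function.uncurry (fun s x => φ x * u s x) p = 0 := by
        filter_upwards [ho.mem_nhds h3] with p hp
        simp only [Function.uncurry]
        rw [hs p.2 hp, zero_mul]
      exact ((continuousAt_const (y := (0 : ℝ))).congr
        (ev.mono fun y hy => hy.symm)).continuousWithinAt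
  · intro s x _ hx
    rw [hs x (by simpa using hx), zero_mul]

lemma kap_int (d : ℕ) : Integrable (fun x : EuclideanSpace ℝ (Fin d) =>
    (1 + ‖x‖ ^ 2) ^ (-(d : ℝ) / 2 - 1)) := by
  have := integrable_rpow_neg_one_add_norm_sq (E := EuclideanSpace ℝ (Fin d)) (μ := volume)
    (r := d + 2) (by simp)
  refine this.congr (Filter.Eventually.of_forall fun x => ?_)
  simp only
  congr 1
  ring

lemma kap_pos (d : ℕ) : 0 < ∫ x : EuclideanSpace ℝ (Fin d),
    (1 + ‖x‖ ^ 2) ^ (-(d : ℝ) / 2 - 1) := by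
  have hp : ∀ x : EuclideanSpace ℝ (Fin d), 0 < (1 + ‖x‖ ^ 2) ^ (-(d : ℝ) / 2 - 1) := fun x => by
    positivity
  rw [integral_pos_iff_support_of_nonneg (fun x => (hp x).le) (kap_int d)]
  rw [show (Function.support fun x : EuclideanSpace ℝ (Fin d) =>
    (1 + ‖x‖ ^ 2) ^ (-(d : ℝ) / 2 - 1)) = univ from by
      ext x; simp only [Function.mem_support, mem_univ, iff_true]; exact (hp x).ne']
  exact isOpen_univ.measure_pos volume univ_nonempty

lemma ac_peak {d : ℕ} {x₀ : EuclideanSpace ℝ (Fin d)} {f : EuclideanSpace ℝ (Fin d) → ℝ}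
    (hf : Continuous f) (hfi : Integrable f) :
    Filter.Tendsto (fun c : ℝ => ∫ x, d * (1 / c) ^ 2 *
        (‖x - x₀‖ ^ 2 + (1 / c) ^ 2) ^ (-(d : ℝ) / 2 - 1) * f x) Filter.atTop
      (nhds (d * (∫ x : EuclideanSpace ℝ (Fin d), (1 + ‖x‖ ^ 2) ^ (-(d : ℝ) / 2 - 1)) * f x₀)) := by
  set κ := ∫ x : EuclideanSpace ℝ (Fin d), (1 + ‖x‖ ^ 2) ^ (-(d : ℝ) / 2 - 1) with hκ
  have κ0 : 0 < κ := kap_pos d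
  have key := tendsto_integral_comp_smul_smul_of_integrable' (μ := volume)
    (φ := fun x : EuclideanSpace ℝ (Fin d) => κ⁻¹ * (1 + ‖x‖ ^ 2) ^ (-(d : ℝ) / 2 - 1))
    (fun x => by positivity) (by rw [integral_const_mul, ← hκ]; field_simp)
    (by
      have h1 : Filter.Tendsto (fun x : EuclideanSpace ℝ (Fin d) => κ⁻¹ * (1 + ‖x‖ ^ 2)⁻¹)
          (Bornology.cobounded _) (nhds (κ⁻¹ * 0)) := by
        apply Filter.Tendsto.const_mul
        apply Filter.Tendsto.inv_tendsto_atTop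
        apply Filter.tendsto_atTop_add_const_left
        exact (Filter.tendsto_pow_atTop (by norm_num)).comp tendsto_norm_cobounded_atTop
      rw [mul_zero] at h1
      refine squeeze_zero (fun x => by positivity) (fun x => ?_) h1
      have hp : 0 < 1 + ‖x‖ ^ 2 := by positivity
      have e1 : ‖x‖ ^ (Module.finrank ℝ (EuclideanSpace ℝ (Fin d))) ≤
          (1 + ‖x‖ ^ 2) ^ ((d : ℝ) / 2) := by
        rw [finrank_euclideanSpace_fin]
        have : ‖x‖ ^ d = (‖x‖ ^ 2) ^ ((d : ℝ) / 2) := by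
          rw [← Real.rpow_natCast (‖x‖) 2, ← Real.rpow_mul (norm_nonneg _), ← Real.rpow_natCast]
          congr 1
          push_cast; ring
        rw [this]
        apply Real.rpow_le_rpow (by positivity) (by linarith) (by positivity)
      calc ‖x‖ ^ (Module.finrank ℝ (EuclideanSpace ℝ (Fin d))) *
            (κ⁻¹ * (1 + ‖x‖ ^ 2) ^ (-(d : ℝ) / 2 - 1))
          ≤ (1 + ‖x‖ ^ 2) ^ ((d : ℝ) / 2) * (κ⁻¹ * (1 + ‖x‖ ^ 2) ^ (-(d : ℝ) / 2 - 1)) := by gcongr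
        _ = κ⁻¹ * ((1 + ‖x‖ ^ 2) ^ ((d : ℝ) / 2) * (1 + ‖x‖ ^ 2) ^ (-(d : ℝ) / 2 - 1)) := by ring
        _ = κ⁻¹ * (1 + ‖x‖ ^ 2)⁻¹ := by
          rw [← Real.rpow_add hp, ← Real.rpow_neg_one (1 + ‖x‖ ^ 2)]
          congr 2
          ring)
    hfi hf.continuousAt (x₀ := x₀)
  have key2 := key.const_mul (d * κ)
  refine key2.congr' ?_
  filter_upwards [Filter.eventually_gt_atTop 0] with c hc
  rw [← integral_const_mul]
  congr 1
  ext x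
  rw [finrank_euclideanSpace_fin, smul_eq_mul]
  have e1 : ‖x - x₀‖ ^ 2 + (1 / c) ^ 2 = (c ^ 2)⁻¹ * (1 + ‖c • (x₀ - x)‖ ^ 2) := by
    rw [norm_smul, Real.norm_eq_abs, abs_of_pos hc, norm_sub_rev]
    field_simp
    ring
  have e2 : ((c ^ 2)⁻¹) ^ (-(d : ℝ) / 2 - 1) = c ^ d * c ^ 2 := by
    rw [← Real.rpow_natCast c 2, ← Real.rpow_neg hc.le, ← Real.rpow_mul hc.le,
      ← Real.rpow_natCast c d, ← Real.rpow_add hc]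
    congr 1
    push_cast; ring
  rw [e1, Real.mul_rpow (by positivity) (by positivity), e2]
  field_simp

set_option maxHeartbeats 1000000 in
lemma ac_lim {d : ℕ} {m n T t R k : ℝ} (hm0 : 0 < m) (hm1 : m < 1) (hn : n * (1 - m) = 1)
    {Ω : Set (EuclideanSpace ℝ (Fin d))} (hΩ : IsOpen Ω)
    {u : ℝ → EuclideanSpace ℝ (Fin d) → ℝ} {u₀ : EuclideanSpace ℝ (Fin d) → ℝ}
    (hsol : IsFDESol m (Ioo 0 T ×ˢ Ω) u)
    (hinit : TakesInit T Ω u u₀) (hext : ExtinctAt T Ω u)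
    {x₀ : EuclideanSpace ℝ (Fin d)} (hR : 0 < R) (hK : closedBall x₀ (3 * R) ⊆ Ω)
    (t0 : 0 < t) (htT : t < T)
    {φ₀ L₀ : EuclideanSpace ℝ (Fin d) → ℝ} (hφ₀ : Tst x₀ R φ₀ L₀)
    (hk : 0 < k) (hLφ : ∀ x, - (k * φ₀ x ^ m) ≤ L₀ x) (hφ1 : ∀ x, φ₀ x ≤ 1)
    (hφs : ∀ x, 2 * R < dist x x₀ → φ₀ x = 0) :
    ∫ x, φ₀ x * u 0 x ≤ Real.exp 1 * ((R ^ 2 / 72 * (6 * R ^ 2) ^ (-(d : ℝ) / 2))⁻¹ *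
      (T ^ n * t ^ (-(n * m)) * (d * (∫ x : EuclideanSpace ℝ (Fin d),
        (1 + ‖x‖ ^ 2) ^ (-(d : ℝ) / 2 - 1)) * u t x₀ ^ m)) +
        t ^ n * (k ^ n * volume.real (closedBall x₀ (5 / 2 * R)))) := by
  have T0 : 0 < T := t0.trans htT
  set q : EuclideanSpace ℝ (Fin d) → ℝ := fun x => (max (1 - ‖x - x₀‖ ^ 2 / (6 * R ^ 2)) 0) ^ 2
    with hq
  have qc : Continuous q := by fun_prop
  have q0 : ∀ x, 0 ≤ q x := fun x => by positivity
  have qs : ∀ x, 5 / 2 * R < dist x x₀ → q x = 0 := by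
    intro x hx
    rw [dist_eq_norm] at hx
    have : 1 ≤ ‖x - x₀‖ ^ 2 / (6 * R ^ 2) := by
      rw [le_div_iff₀ (by positivity)]; nlinarith
    simp only [hq]
    rw [max_eq_right (by linarith)]; simp
  have ucs : ContinuousOn (u t) Ω :=
    hinit.1.comp (f := fun x => (t, x)) (by fun_prop) fun x hx => ⟨⟨t0.le, htT⟩, hx⟩
  have ucm : ContinuousOn (fun x => u t x ^ m) Ω := ucs.rpow_const fun _ _ => Or.inr hm0.le
  set f : EuclideanSpace ℝ (Fin d) → ℝ := fun x => q x * u t x ^ m with hf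
  have fc : Continuous f := ext_cont hR hΩ hK qc qs ucm
  have fi : Integrable f := tst_int (R := 5 / 2 * R) (x₀ := x₀) fc fun x hx => by
    simp [hf, qs x hx]
  have fx : f x₀ = u t x₀ ^ m := by simp [hf, hq]
  set C := (R ^ 2 / 72 * (6 * R ^ 2) ^ (-(d : ℝ) / 2))⁻¹ with hC
  have C0 : 0 < C := by positivity
  set V := volume.real (closedBall x₀ (5 / 2 * R)) with hV
  have step1 : ∀ a, 0 < a → a < t → ∀ c : ℝ, 1 / R ≤ c →
      ∫ x, φ₀ x * u a x ≤ Real.exp 1 * (C * (0 +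
        T ^ n * (t - a) ^ (-(n * m)) * ∫ x, d * (1 / c) ^ 2 *
        (‖x - x₀‖ ^ 2 + (1 / c) ^ 2) ^ (-(d : ℝ) / 2 - 1) * f x) + t ^ n * (k ^ n * V)) := by
    intro a a0 hat c hc
    have c0 : 0 < c := lt_of_lt_of_le (by positivity) hc
    have hcR : 1 / c ≤ R := by
      rw [div_le_iff₀ hR] at hc
      rw [div_le_iff₀ c0]; linarith
    obtain ⟨φ, L, hφ, hlow, hL⟩ := green_test x₀ hR (show 0 < 1 / c by positivity) hcR
    have tl : Filter.Tendsto (fun S => ∫ x, φ x * u S x) (nhdsWithin T (Ioo t T)) (nhds 0) := by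
      have h1 := time_cont hR hΩ hK hφ.cont hφ.supp hext.1 T ⟨T0, le_rfl⟩
      have h2 : ∫ x, φ x * u T x = 0 := by
        rw [← integral_zero (EuclideanSpace ℝ (Fin d)) ℝ (μ := volume)]
        congr 1
        ext x
        by_cases hx : 5 / 2 * R < dist x x₀
        · rw [hφ.supp x hx, zero_mul]
        · rw [hext.2.1 x (hK (by rw [mem_closedBall]; linarith)), mul_zero]
      have h3 := h1.tendsto
      rw [h2] at h3
      exact h3.mono_left (nhdsWithin_mono _ fun s hs => ⟨t0.trans hs.1, hs.2.le⟩)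
    haveI : (nhdsWithin T (Ioo t T)).NeBot := right_nhdsWithin_Ioo_neBot htT
    have tl2 := (((tl.add_const (T ^ n * (t - a) ^ (-(n * m)) * ∫ x, d * (1 / c) ^ 2 *
        (‖x - x₀‖ ^ 2 + (1 / c) ^ 2) ^ (-(d : ℝ) / 2 - 1) * f x)).const_mul C).add_const
          (t ^ n * (k ^ n * V))).const_mul (Real.exp 1)
    refine ge_of_tendsto tl2 ?_
    filter_upwards [self_mem_nhdsWithin] with S hS
    have := ac_comb hm0 hm1 hn hΩ hsol hR hK a0 hat hS.1 hS.2 hφ₀ hφ hk hLφ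
      (ψ := fun x => d * (1 / c) ^ 2 * (‖x - x₀‖ ^ 2 + (1 / c) ^ 2) ^ (-(d : ℝ) / 2 - 1) * q x)
      (by
        apply Continuous.mul _ qc
        apply Continuous.mul continuous_const
        exact Continuous.rpow_const (by fun_prop) fun x => Or.inl (by positivity))
      (fun x => by have := q0 x; positivity)
      (fun x hx => by simp only [qs x hx, mul_zero])
      hL C0.le (fun x => by
        by_cases hx : 2 * R < dist x x₀
        · rw [hφs x hx]
          exact mul_nonneg C0.le (hφ.nonneg x)
        · refine (hφ1 x).trans ?_
          have := hlow x (not_lt.1 hx)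
          calc (1 : ℝ) = C * (R ^ 2 / 72 * (6 * R ^ 2) ^ (-(d : ℝ) / 2)) := by
                rw [hC, inv_mul_cancel₀ (by positivity)]
            _ ≤ C * φ x := by gcongr)
    simp only [hf]
    simp only [mul_assoc] at this ⊢
    exact this
  have step2 : ∀ a, 0 < a → a < t →
      ∫ x, φ₀ x * u a x ≤ Real.exp 1 * (C * (0 +
        T ^ n * (t - a) ^ (-(n * m)) * (d * (∫ x : EuclideanSpace ℝ (Fin d),
        (1 + ‖x‖ ^ 2) ^ (-(d : ℝ) / 2 - 1)) * u t x₀ ^ m)) + t ^ n * (k ^ n * V)) := by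
    intro a a0 hat
    have pk := ac_peak (x₀ := x₀) fc fi
    rw [fx] at pk
    have tl2 := ((((pk.const_mul (T ^ n * (t - a) ^ (-(n * m)))).const_add 0).const_mul C).add_const
          (t ^ n * (k ^ n * V))).const_mul (Real.exp 1)
    refine ge_of_tendsto tl2 ?_
    filter_upwards [Filter.eventually_ge_atTop (1 / R)] with c hc
    exact step1 a a0 hat c hc
  simp only [zero_add] at step2
  haveI : (nhdsWithin (0 : ℝ) (Ioo 0 t)).NeBot := left_nhdsWithin_Ioo_neBot t0
  have l1 : Filter.Tendsto (fun a => ∫ x, φ₀ x * u a x) (nhdsWithin 0 (Ioo 0 t))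
      (nhds (∫ x, φ₀ x * u 0 x)) :=
    (time_cont hR hΩ hK hφ₀.cont hφ₀.supp hinit.1 0 ⟨le_rfl, T0⟩).tendsto.mono_left
      (nhdsWithin_mono _ fun s hs => ⟨hs.1.le, hs.2.trans htT⟩)
  have l2 : Filter.Tendsto (fun a => (t - a) ^ (-(n * m))) (nhdsWithin 0 (Ioo 0 t))
      (nhds (t ^ (-(n * m)))) := by
    have : ContinuousAt (fun a : ℝ => (t - a) ^ (-(n * m))) 0 :=
      ContinuousAt.rpow_const (by fun_prop) (Or.inl (by simpa using t0.ne'))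
    have h := this.tendsto
    simp only [sub_zero] at h
    exact h.mono_left nhdsWithin_le_nhds
  have l3 := (((((l2.const_mul (T ^ n)).mul_const (d * (∫ x : EuclideanSpace ℝ (Fin d),
        (1 + ‖x‖ ^ 2) ^ (-(d : ℝ) / 2 - 1)) * u t x₀ ^ m))).const_mul C).add_const
          (t ^ n * (k ^ n * V))).const_mul (Real.exp 1)
  refine le_of_tendsto_of_tendsto l1 l3 ?_
  filter_upwards [self_mem_nhdsWithin] with a ha
  exact step2 a ha.1 ha.2

/-- **Aronson–Caffarelli type estimate** (Theorem 1.1, first part). -/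
theorem aronson_caffarelli_fde
    (d : ℕ) (hd : 1 ≤ d) (m : ℝ) (hm0 : 0 < m) (hm1 : m < 1) :
    ∃ C₁ C₂ : ℝ, 0 < C₁ ∧ 0 < C₂ ∧
      ∀ (Ω : Set (EuclideanSpace ℝ (Fin d))), IsOpen Ω →
      ∀ (u : ℝ → EuclideanSpace ℝ (Fin d) → ℝ) (u₀ : EuclideanSpace ℝ (Fin d) → ℝ) (T : ℝ),
        0 < T →
        IsFDESol m (Ioo 0 T ×ˢ Ω) u →
        (∀ x ∈ Ω, 0 ≤ u₀ x) →
        LocallyIntegrableOn u₀ Ω →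
        TakesInit T Ω u u₀ →
        ExtinctAt T Ω u →
      ∀ (x₀ : EuclideanSpace ℝ (Fin d)) (R : ℝ), 0 < R →
        closedBall x₀ (3 * R) ⊆ Ω →
      ∀ t : ℝ, 0 < t → t < T →
        R ^ (-(d : ℝ)) * ∫ x in ball x₀ R, u₀ x ≤
          C₁ * R ^ (-2 / (1 - m)) * t ^ ((1 : ℝ) / (1 - m)) +
          C₂ * T ^ ((1 : ℝ) / (1 - m)) * R ^ (-2 : ℝ) * t ^ (-(m / (1 - m))) *
            u t x₀ ^ m := by
  obtain ⟨p, p0, hp⟩ := hp_test d m hm0 hm1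
  obtain ⟨n, hn⟩ : ∃ n, n = 1 / (1 - m) := ⟨_, rfl⟩
  have hm2 : 0 < 1 - m := by linarith
  have hn1 : n * (1 - m) = 1 := by rw [hn]; field_simp
  have hn0 : 0 < n := by rw [hn]; positivity
  have d0 : (0 : ℝ) < d := by exact_mod_cast hd
  have p0' : (0 : ℝ) < p := by exact_mod_cast p0
  obtain ⟨κ, hκ⟩ : ∃ κ, κ = ∫ x : EuclideanSpace ℝ (Fin d),
    (1 + ‖x‖ ^ 2) ^ (-(d : ℝ) / 2 - 1) := ⟨_, rfl⟩
  have κ0 : 0 < κ := by rw [hκ]; exact kap_pos d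
  obtain ⟨V, hV⟩ : ∃ V, V = volume.real (ball (0 : EuclideanSpace ℝ (Fin d)) 1) := ⟨_, rfl⟩
  have V0 : 0 < V := by
    rw [hV]
    exact ENNReal.toReal_pos (measure_ball_pos _ _ one_pos).ne' measure_ball_lt_top.ne
  refine ⟨(4 / 3) ^ p * (Real.exp 1 * ((d * p / 2) ^ n * ((5 / 2) ^ d * V))),
    (4 / 3) ^ p * (Real.exp 1 * (72 * 6 ^ ((d : ℝ) / 2) * (d * κ))), by positivity, by positivity, ?_⟩
  intro Ω hΩ u u₀ T T0 hsol hu₀ _ hinit hext x₀ R hR hK t t0 htT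
  obtain ⟨φ, L, hφ, hL, hφ1, hφs, hlow⟩ := hp x₀ R hR
  have main := ac_lim hm0 hm1 hn1 hΩ hsol hinit hext hR hK t0 htT hφ
    (k := d * p / (2 * R ^ 2)) (by positivity) hL hφ1 hφs
  rw [← hκ, Measure.addHaar_real_closedBall volume x₀ (by positivity : 0 ≤ 5 / 2 * R),
    finrank_euclideanSpace_fin, ← hV] at main
  have hbΩ : ball x₀ R ⊆ Ω := (ball_subset_closedBall.trans
    (closedBall_subset_closedBall (by linarith))).trans hK
  have uc0 : ContinuousOn (u 0) Ω :=
    hinit.1.comp (f := fun x => ((0 : ℝ), x)) (by fun_prop) fun x hx => ⟨⟨le_rfl, T0⟩, hx⟩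
  have int1 : Integrable fun x => φ x * u 0 x := tst_int (R := 5 / 2 * R) (x₀ := x₀)
    (ext_cont hR hΩ hK hφ.cont hφ.supp uc0) fun x hx => by rw [hφ.supp x hx, zero_mul]
  have u0n : ∀ x, 0 ≤ φ x * u 0 x := by
    intro x
    by_cases hx : 5 / 2 * R < dist x x₀
    · rw [hφ.supp x hx, zero_mul]
    · have hx' : x ∈ Ω := hK (by rw [mem_closedBall]; linarith)
      rw [hinit.2 x hx']
      exact mul_nonneg (hφ.nonneg x) (hu₀ x hx')
  have int2 : IntegrableOn (u 0) (ball x₀ R) :=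
    ((uc0.mono hK).integrableOn_compact (isCompact_closedBall _ _)).mono_set
      (ball_subset_closedBall.trans (closedBall_subset_closedBall (by linarith)))
  have first : ∫ x in ball x₀ R, u₀ x ≤ (4 / 3) ^ p * ∫ x, φ x * u 0 x := by
    calc ∫ x in ball x₀ R, u₀ x = ∫ x in ball x₀ R, u 0 x :=
          setIntegral_congr_fun measurableSet_ball fun x hx => (hinit.2 x (hbΩ hx)).symm
      _ ≤ ∫ x in ball x₀ R, (4 / 3) ^ p * (φ x * u 0 x) := by
          refine setIntegral_mono_on int2 (int1.const_mul _).integrableOn measurableSet_ball ?_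
          intro x hx
          have h1 : 0 ≤ u 0 x := by
            rw [hinit.2 x (hbΩ hx)]
            exact hu₀ x (hbΩ hx)
          have h2 : 1 ≤ (4 / 3 : ℝ) ^ p * φ x := by
            calc (1 : ℝ) = (4 / 3) ^ p * (3 / 4) ^ p := by rw [← mul_pow]; norm_num
              _ ≤ _ := by gcongr; exact hlow x hx
          nlinarith [mul_le_mul_of_nonneg_right h2 h1]
      _ ≤ ∫ x, (4 / 3) ^ p * (φ x * u 0 x) :=
          setIntegral_le_integral (int1.const_mul _)
            (Filter.Eventually.of_forall fun x => mul_nonneg (by positivity) (u0n x))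
      _ = _ := integral_const_mul _ _
  have e1 : (R ^ 2 / 72 * (6 * R ^ 2) ^ (-(d : ℝ) / 2))⁻¹ =
      72 * 6 ^ ((d : ℝ) / 2) * (R ^ (d : ℝ) * R ^ (-2 : ℝ)) := by
    rw [Real.mul_rpow (by norm_num) (by positivity), neg_div, Real.rpow_neg (by norm_num),
      Real.rpow_neg (by positivity), Real.rpow_neg hR.le]
    have : (R ^ 2) ^ ((d : ℝ) / 2) = R ^ (d : ℝ) := by
      rw [← Real.rpow_natCast R 2, ← Real.rpow_mul hR.le]
      congr 1
      push_cast; ring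
    rw [this]
    norm_num
    field_simp
  have e2 : (d * p / (2 * R ^ 2) : ℝ) ^ n = (d * p / 2) ^ n * R ^ (-2 / (1 - m)) := by
    have : (d * p / (2 * R ^ 2) : ℝ) = (d * p / 2) * R ^ (-2 : ℝ) := by
      rw [Real.rpow_neg hR.le]
      norm_num
      field_simp
    rw [this, Real.mul_rpow (by positivity) (by positivity), ← Real.rpow_mul hR.le, hn]
    congr 2
    ring
  have e3 : R ^ (-(d : ℝ)) * R ^ (d : ℝ) = 1 := by
    rw [← Real.rpow_add hR]; simp
  have e4 : -(m / (1 - m)) = -(n * m) := by rw [hn]; ring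
  rw [← hn, e4]
  have e5 : (5 / 2 * R) ^ d = (5 / 2) ^ d * R ^ (d : ℝ) := by
    rw [mul_pow, Real.rpow_natCast]
  rw [e1, e2, e5] at main
  have hRd : 0 < R ^ (-(d : ℝ)) := by positivity
  calc R ^ (-(d : ℝ)) * ∫ x in ball x₀ R, u₀ x
      ≤ R ^ (-(d : ℝ)) * ((4 / 3) ^ p * _) := by
        refine mul_le_mul_of_nonneg_left (first.trans ?_) hRd.le
        exact mul_le_mul_of_nonneg_left main (by positivity)
    _ = (R ^ (-(d : ℝ)) * R ^ (d : ℝ)) *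
        ((4 / 3) ^ p * (Real.exp 1 * ((d * p / 2) ^ n * ((5 / 2) ^ d * V))) *
          R ^ (-2 / (1 - m)) * t ^ n +
        (4 / 3) ^ p * (Real.exp 1 * (72 * 6 ^ ((d : ℝ) / 2) * (d * κ))) * T ^ n * R ^ (-2 : ℝ) *
          t ^ (-(n * m)) * u t x₀ ^ m) := by ring
    _ = _ := by rw [e3, one_mul]
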